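/- arXiv:2311.11788 — 2 statements merged into one kernel-verified Lean document; each statement's English description precedes it below -/
import Mathlib

section
/- Let Γ₁, Γ₂ ⊆ ℕ^r be affine semigroups whose join Γ = Γ₁ ⊔ Γ₂ is defined. Then for each i, the multiset of i-Betti Γ-degrees of Γ satisfies ℬᵢ(Γ) = ⋃_{p₁+p₂=i} ( ℬ_{p₁}(Γ₁) + ℬ_{p₂}(Γ₂) ), where ℬ_{p₁}(Γ₁) + ℬ_{p₂}(Γ₂) denotes the multiset of sums of a p₁-Betti Γ₁-degree and a p₂-Betti Γ₂-degree (with the conventions ℬ₀ = {0} and ℬ_p = ∅ for p > pd). -/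
/-!
The Betti degrees of the join are read off from the tensor product over `K` of the given minimal
resolutions `F₁` of `K[Γ₁]` and `F₂` of `K[Γ₂]`: it is a minimal graded free resolution of
`K[Γ₁ ⊔ Γ₂]`, its generators in homological degree `i` are the pairs of generators of homological
degrees `p₁ + p₂ = i`, and their degrees are the sums. Two facts remain: any two minimal graded
resolutions have the same Betti degrees, and the tensor product is exact. To avoid casts between
homological degrees, a resolution is treated as one differential module with a bigraded basis
(`BasedRes`, obtained from a `MinFreeRes` by `MinFreeRes.toBased`).

*Uniqueness* (`BasedRes.betti_unique`). The identity of `K[Γ]` lifts to degree-preserving chain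
maps `P`, `Q` between two resolutions (`exists_lift`), and `Q * P` is homotopic to the identity
(`exists_homotopy`). The differentials have no constant terms, so `Q * P = 1` modulo the maximal
ideal, where `P` and `Q` are matrices over `K` and `P` is block diagonal for the bigrading.
Comparing ranks of blocks, in both directions, shows that each bidegree has the same number of
generators (`card_le`).

*Exactness* (`BasedRes.tensorMat_exact`). Over the field `K` each `Fᵢ` contracts onto a copy of
`K[Γᵢ]`, by a homotopy that anticommutes with the sign involution (`exists_contraction`). These
combine to a contraction of `F₁ ⊗ F₂` onto `K[Γ₁] ⊗ K[Γ₂]` (`tensor_contraction`). Since the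
extremal rays are linearly independent, `(v, w) ↦ v + w` is injective on `Γ₁ × Γ₂`
(`separated_of_rays`), hence `K[Γ₁] ⊗ K[Γ₂] → K[t]` is injective (`map_toric_eq_zero`). So a cycle
of `F₁ ⊗ F₂` killed by the augmentation to `K[Γ₁ ⊔ Γ₂] ⊆ K[t]` is a boundary.
-/

open MvPolynomial

noncomputable section

set_option synthInstance.maxHeartbeats 1000000
set_option maxHeartbeats 1000000

/-- The affine semigroup of `ℕ^d` generated by `a₁,…,a_n`. -/
def affSemigroup {n d : ℕ} (a : Fin n → Fin d → ℕ) : AddSubmonoid (Fin d → ℕ) :=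
  AddSubmonoid.closure (Set.range a)

/-- `v` lies in the rational polyhedral cone generated by `a₁,…,a_n`. -/
def inCone {n d : ℕ} (a : Fin n → Fin d → ℕ) (v : Fin d → ℕ) : Prop :=
  ∃ c : Fin n → ℚ, (∀ i, 0 ≤ c i) ∧ ∀ j, (v j : ℚ) = ∑ i, c i * (a i j : ℚ)

/-- `ℋ(Γ) = (Cone(Γ) \ Γ) ∩ ℕ^d`, the set of holes of the affine semigroup. -/
def holes {n d : ℕ} (a : Fin n → Fin d → ℕ) : Set (Fin d → ℕ) :=
  {v | inCone a v ∧ v ∉ affSemigroup a}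

/-- The pseudo-Frobenius elements of the affine semigroup generated by `a`. -/
def pseudoFrobenius {n d : ℕ} (a : Fin n → Fin d → ℕ) : Set (Fin d → ℕ) :=
  {f | f ∈ holes a ∧ ∀ γ ∈ affSemigroup a, γ ≠ 0 → f + γ ∈ affSemigroup a}

/-- The toric (defining) ideal of the semigroup ring `K[Γ]`: the kernel of
`K[x₁,…,x_n] → K[t₁,…,t_d]`, `x_i ↦ t^{a_i}`. -/
def toricIdeal (K : Type*) [Field K] {n d : ℕ} (a : Fin n → Fin d → ℕ) :
    Ideal (MvPolynomial (Fin n) K) :=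
  RingHom.ker (MvPolynomial.aeval
      (fun i => MvPolynomial.monomial (Finsupp.equivFunOnFinite.symm (a i)) (1 : K)) :
    MvPolynomial (Fin n) K →ₐ[K] MvPolynomial (Fin d) K)

/-- The `Γ`-degree of an exponent vector: `e ↦ Σ eᵢ • aᵢ ∈ ℕ^d`. -/
def gammaDeg {n d : ℕ} (a : Fin n → Fin d → ℕ) (e : Fin n →₀ ℕ) : Fin d → ℕ :=
  ∑ i, e i • a i

/-- A (finite) minimal `Γ`-graded free resolution of the semigroup ring
`K[Γ] = K[x₁,…,x_n]/I_Γ` over the polynomial ring `R = K[x₁,…,x_n]`: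
`⋯ → R^{β₂} → R^{β₁} → R^{β₀} = R → K[Γ] → 0`,
where the `i`-th free module `R^{βᵢ}` has generators of `Γ`-degrees `deg i j`, the
differentials are given by matrices `mat i` whose entries are `Γ`-homogeneous of the
appropriate degrees and lie in the graded maximal ideal (minimality), and the complex
is exact. -/
structure MinFreeRes (K : Type*) [Field K] {n d : ℕ} (a : Fin n → Fin d → ℕ) where
  /-- the Betti numbers -/
  β : ℕ → ℕ
  β0 : β 0 = 1
  /-- the resolution has finite length -/
  bdd : ∃ N, ∀ i, N ≤ i → β i = 0
  /-- the `Γ`-degrees of the generators (the `i`-Betti `Γ`-degrees) -/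
  deg : (i : ℕ) → Fin (β i) → (Fin d → ℕ)
  deg0 : ∀ j, deg 0 j = 0
  /-- the matrix of the differential `R^{β_{i+1}} → R^{βᵢ}`;
  `mat i j j'` is the entry with source generator `j` and target generator `j'` -/
  mat : (i : ℕ) → Fin (β (i + 1)) → Fin (β i) → MvPolynomial (Fin n) K
  /-- the differentials are `Γ`-graded -/
  homog : ∀ i j j', ∀ e ∈ (mat i j j').support,
    deg (i + 1) j = gammaDeg a e + deg i j'
  /-- minimality: all entries lie in the maximal ideal `(x₁,…,x_n)` -/
  minimal : ∀ i j j', MvPolynomial.coeff 0 (mat i j j') = 0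
  /-- exactness at homological degree `0`: the kernel of the augmentation
  `R^{β₀} → K[Γ] = R/I_Γ` is the image of the first differential -/
  exact_zero :
    LinearMap.ker ((toricIdeal K a).mkQ ∘ₗ
        (LinearMap.lsum (MvPolynomial (Fin n) K)
            (fun _ : Fin (β 0) => MvPolynomial (Fin n) K) ℕ)
          fun _ => LinearMap.id) =
      LinearMap.range (Matrix.mulVecLin (Matrix.of fun j' j => mat 0 j j'))
  /-- exactness at all higher homological degrees -/
  exact_succ : ∀ i,
    LinearMap.ker (Matrix.mulVecLin (Matrix.of fun j' j => mat i j j')) =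
      LinearMap.range (Matrix.mulVecLin (Matrix.of fun j' j => mat (i + 1) j j'))

/-- The length (projective dimension of `K[Γ]`) of a minimal free resolution. -/
def MinFreeRes.pd {K : Type*} [Field K] {n d : ℕ} {a : Fin n → Fin d → ℕ}
    (F : MinFreeRes K a) : ℕ :=
  sSup {i | F.β i ≠ 0}

/-- The multiset `ℬᵢ` of `i`-Betti `Γ`-degrees of a minimal free resolution. -/
def MinFreeRes.Betti {K : Type*} [Field K] {n d : ℕ} {a : Fin n → Fin d → ℕ}
    (F : MinFreeRes K a) (i : ℕ) : Multiset (Fin d → ℕ) :=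
  Multiset.map (F.deg i) Finset.univ.val

/-- `Γ` is a maximal projective dimension (MPD) semigroup:
`pd_R K[Γ] = n − 1`, i.e. some (hence any) minimal graded free resolution of `K[Γ]`
has length `n − 1`. -/
def IsMPD (K : Type*) [Field K] {n d : ℕ} (a : Fin n → Fin d → ℕ) : Prop :=
  ∃ F : MinFreeRes K a, F.pd = n - 1

/-! ### Based graded resolutions -/

section Uniqueness

variable {K : Type*} [Field K] {n d : ℕ} {a : Fin n → Fin d → ℕ}

/-- A minimal graded free resolution of `K[Γ]` collected into one differential module: a free
module with finite basis `J`, each basis vector carrying a homological degree `h` and a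
`Γ`-degree `δ`, and a square-zero matrix `D` (column `j` is the image of the `j`-th basis
vector). The vector `o` is the only one of homological degree `0`, so the augmentation onto
`K[Γ]` is `x ↦ x o` modulo the toric ideal; exactness in all homological degrees at once is
`exact`. -/
structure BasedRes (K : Type*) [Field K] {n d : ℕ} (a : Fin n → Fin d → ℕ)
    (J : Type) [Fintype J] [DecidableEq J] where
  h : J → ℕ
  δ : J → Fin d → ℕ
  D : Matrix J J (MvPolynomial (Fin n) K)
  o : J
  h_eq_zero : ∀ j, h j = 0 ↔ j = o
  δ_o : δ o = 0
  homog : ∀ k j, ∀ e ∈ (D k j).support, h j = h k + 1 ∧ δ j = gammaDeg a e + δ k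
  minimal : ∀ k j, coeff 0 (D k j) = 0
  sq : D * D = 0
  aug : ∀ j, D o j ∈ toricIdeal K a
  exact : ∀ x : J → MvPolynomial (Fin n) K, D.mulVec x = 0 → x o ∈ toricIdeal K a →
    ∃ y, D.mulVec y = x

lemma gammaDeg_add (e f : Fin n →₀ ℕ) : gammaDeg a (e + f) = gammaDeg a e + gammaDeg a f := by
  simp [gammaDeg, add_smul, Finset.sum_add_distrib]

lemma gammaDeg_zero : gammaDeg a 0 = 0 := by
  simp [gammaDeg]

lemma exists_split_support (p : MvPolynomial (Fin n) K) (Q : (Fin n →₀ ℕ) → Prop) :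
    ∃ p₁ p₂, p = p₁ + p₂ ∧ (∀ e ∈ p₁.support, Q e) ∧ ∀ e ∈ p₂.support, ¬ Q e := by
  classical
  refine ⟨∑ e ∈ p.support.filter Q, monomial e (coeff e p),
    ∑ e ∈ p.support.filter (fun e => ¬ Q e), monomial e (coeff e p), ?_, ?_, ?_⟩
  · rw [Finset.sum_filter_add_sum_filter_not, support_sum_monomial_coeff]
  · intro e he
    obtain ⟨f, hf, hfe⟩ := Finset.mem_biUnion.1 (support_sum he)
    have := Finset.mem_singleton.1 (support_monomial_subset hfe)
    subst this
    exact (Finset.mem_filter.1 hf).2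
  · intro e he
    obtain ⟨f, hf, hfe⟩ := Finset.mem_biUnion.1 (support_sum he)
    have := Finset.mem_singleton.1 (support_monomial_subset hfe)
    subst this
    exact (Finset.mem_filter.1 hf).2

lemma exists_of_mem_support_sum_mul {J : Type} [Fintype J]
    (p q : J → MvPolynomial (Fin n) K) {e : Fin n →₀ ℕ}
    (he : e ∈ (∑ k, p k * q k).support) :
    ∃ k, ∃ e₁ ∈ (p k).support, ∃ e₂ ∈ (q k).support, e₁ + e₂ = e := by
  classical
  obtain ⟨k, -, hk⟩ := Finset.mem_biUnion.1 (support_sum he)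
  obtain ⟨e₁, h₁, e₂, h₂, rfl⟩ := Finset.mem_add.1 (support_mul _ _ hk)
  exact ⟨k, e₁, h₁, e₂, h₂, rfl⟩

lemma exists_mem_support {p : MvPolynomial (Fin n) K} (hp : p ≠ 0) : ∃ e, e ∈ p.support :=
  Finset.nonempty_iff_ne_empty.2 (by simpa using hp)

namespace BasedRes

variable {J : Type} [Fintype J] [DecidableEq J] (C : BasedRes K a J)
variable {J' : Type} [Fintype J'] [DecidableEq J'] (C' : BasedRes K a J')

lemma D_col_o (k : J) : C.D k C.o = 0 := by
  by_contra hne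
  obtain ⟨e, he⟩ := exists_mem_support hne
  have := (C.homog k C.o e he).1
  rw [(C.h_eq_zero C.o).2 rfl] at this
  omega

/-- All monomials of the vector `x` have (homological, `Γ`-) degrees satisfying `P`. -/
def DegIn (P : ℕ → (Fin d → ℕ) → Prop) (x : J → MvPolynomial (Fin n) K) : Prop :=
  ∀ k, ∀ e ∈ (x k).support, P (C.h k) (gammaDeg a e + C.δ k)

lemma DegIn.mulVec {P : ℕ → (Fin d → ℕ) → Prop} {x : J → MvPolynomial (Fin n) K}
    (hx : C.DegIn P x) : C.DegIn (fun i s => P (i + 1) s) (C.D.mulVec x) := by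
  intro l e he
  obtain ⟨k, e₁, h₁, e₂, h₂, rfl⟩ := exists_of_mem_support_sum_mul (fun k => C.D l k) x he
  obtain ⟨hh, hd⟩ := C.homog l k e₁ h₁
  have := hx k e₂ h₂
  rw [hh, hd] at this
  have hadd : gammaDeg a (e₁ + e₂) + C.δ l = gammaDeg a e₂ + (gammaDeg a e₁ + C.δ l) := by
    rw [gammaDeg_add]; abel
  rwa [hadd]

/-- Exactness in the graded sense: a homogeneous cycle that the augmentation kills is the boundary
of a homogeneous vector. -/
lemma exact_graded (i : ℕ) (s : Fin d → ℕ) (x : J → MvPolynomial (Fin n) K)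
    (hx : C.DegIn (fun i' s' => i' = i ∧ s' = s) x) (hD : C.D.mulVec x = 0)
    (ho : x C.o ∈ toricIdeal K a) :
    ∃ y, C.D.mulVec y = x ∧ C.DegIn (fun i' s' => i' = i + 1 ∧ s' = s) y := by
  obtain ⟨y, hy⟩ := C.exact x hD ho
  choose y₁ y₂ hsum hy₁ hy₂ using fun k => exists_split_support (y k)
    (fun e => C.h k = i + 1 ∧ gammaDeg a e + C.δ k = s)
  have h₁ : C.DegIn (fun i' s' => i' = i + 1 ∧ s' = s) y₁ := fun k e he => hy₁ k e he
  have h₂ : C.DegIn (fun i' s' => ¬ (i' = i + 1 ∧ s' = s)) y₂ := fun k e he => hy₂ k e he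
  have hsum' : y = y₁ + y₂ := funext hsum
  refine ⟨y₁, ?_, h₁⟩
  have g₁ := h₁.mulVec
  have g₂ := h₂.mulVec
  rw [hsum', Matrix.mulVec_add] at hy
  funext k
  ext e
  have hk : coeff e (C.D.mulVec y₁ k) + coeff e (C.D.mulVec y₂ k) = coeff e (x k) := by
    rw [← hy]; simp
  by_cases hdeg : C.h k = i ∧ gammaDeg a e + C.δ k = s
  · have : coeff e (C.D.mulVec y₂ k) = 0 := by
      by_contra hne
      exact g₂ k e (mem_support_iff.2 hne) ⟨by rw [hdeg.1], hdeg.2⟩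
    rw [← hk, this, add_zero]
  · have e₁ : coeff e (C.D.mulVec y₁ k) = 0 := by
      by_contra hne
      have := g₁ k e (mem_support_iff.2 hne)
      exact hdeg ⟨by have := this.1; omega, this.2⟩
    have e₂ : coeff e (x k) = 0 := by
      by_contra hne
      exact hdeg (hx k e (mem_support_iff.2 hne))
    rw [e₁, e₂]

/-- Comparison map: a degree-preserving chain map `P` between two resolutions lifting the
identity, constructed one homological degree at a time. -/
lemma exists_lift : ∃ P : Matrix J' J (MvPolynomial (Fin n) K),
    C'.D * P = P * C.D ∧
    (∀ j, C'.DegIn (fun i s => i = C.h j ∧ s = C.δ j) (fun k => P k j)) ∧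
    (∀ k, P k C.o = if k = C'.o then 1 else 0) := by
  have key : ∀ N : ℕ, ∃ P : Matrix J' J (MvPolynomial (Fin n) K),
      (∀ j, C.h j ≤ N → ∀ k, (C'.D * P) k j = (P * C.D) k j) ∧
      (∀ j, C.h j ≤ N → C'.DegIn (fun i s => i = C.h j ∧ s = C.δ j) (fun k => P k j)) ∧
      (∀ k, P k C.o = if k = C'.o then 1 else 0) := by
    intro N
    induction N with
    | zero =>
      refine ⟨Matrix.of fun k _ => if k = C'.o then 1 else 0, ?_, ?_, fun k => rfl⟩
      · intro j hj k
        obtain rfl := (C.h_eq_zero j).1 (by omega)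
        simp [Matrix.mul_apply, D_col_o]
      · intro j hj k e he
        obtain rfl := (C.h_eq_zero j).1 (by omega)
        by_cases hk : k = C'.o
        · subst hk
          simp only [Matrix.of_apply, if_true, mem_support_iff, coeff_one, ne_eq, ite_eq_right_iff,
            Classical.not_imp] at he
          obtain ⟨rfl, -⟩ := he
          rw [gammaDeg_zero, C.δ_o, C'.δ_o]
          simp [(C.h_eq_zero C.o).2 rfl, (C'.h_eq_zero C'.o).2 rfl]
        · simp [hk] at he
    | succ N ih =>
      obtain ⟨P, h₁, h₂, h₃⟩ := ih
      have low : ∀ j, C.h j = N + 1 → ∀ k, C.D k j ≠ 0 → C.h k = N := by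
        intro j hj k hne
        obtain ⟨e, he⟩ := exists_mem_support hne
        have := (C.homog k j e he).1
        omega
      have step : ∀ j, ∃ y : J' → MvPolynomial (Fin n) K, C.h j = N + 1 →
          (C'.D.mulVec y = fun k => (P * C.D) k j) ∧
          C'.DegIn (fun i s => i = C.h j ∧ s = C.δ j) y := by
        intro j
        by_cases hj : C.h j = N + 1
        swap
        · exact ⟨0, fun h => absurd h hj⟩
        have hex := C'.exact_graded N (C.δ j) (fun k => (P * C.D) k j) ?_ ?_ ?_
        · obtain ⟨y, hy, hy'⟩ := hex
          refine ⟨y, fun _ => ⟨hy, ?_⟩⟩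
          rw [hj]; exact hy'
        · intro l e he
          obtain ⟨k, e₁, he₁, e₂, he₂, rfl⟩ :=
            exists_of_mem_support_sum_mul (fun k => P l k) (fun k => C.D k j) he
          obtain ⟨a1, a2⟩ := C.homog k j e₂ he₂
          obtain ⟨b1, b2⟩ := h₂ k (by omega) l e₁ he₁
          refine ⟨by omega, ?_⟩
          rw [a2, ← b2, gammaDeg_add]; abel
        · have : C'.D.mulVec (fun k => (P * C.D) k j) = fun k => (C'.D * P * C.D) k j := by
            rw [Matrix.mul_assoc]; rfl
          rw [this]
          funext k
          have : (C'.D * P * C.D) k j = (P * C.D * C.D) k j := by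
            rw [Matrix.mul_apply, Matrix.mul_apply]
            refine Finset.sum_congr rfl fun l _ => ?_
            by_cases hl : C.D l j = 0
            · simp [hl]
            · rw [h₁ l (low j hj l hl).le k]
          rw [this, Matrix.mul_assoc, C.sq, Matrix.mul_zero]
          rfl
        · refine Ideal.sum_mem _ fun k _ => ?_
          by_cases hk : C.D k j = 0
          · simp [hk]
          by_cases hP : P C'.o k = 0
          · simp [hP]
          obtain ⟨e, he⟩ := exists_mem_support hP
          have b1 := (h₂ k (low j hj k hk).le C'.o e he).1
          rw [(C'.h_eq_zero C'.o).2 rfl] at b1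
          obtain rfl := (C.h_eq_zero k).1 b1.symm
          exact Ideal.mul_mem_left _ _ (C.aug j)
      choose y hy using step
      have hP' : ∀ j, C.h j ≤ N → ∀ k, (Matrix.of fun k j => if C.h j = N + 1 then y j k
          else P k j) k j = P k j := by
        intro j hj k
        simp [show C.h j ≠ N + 1 by omega]
      have hPD : ∀ j, C.h j ≤ N + 1 → ∀ k, ((Matrix.of fun k j => if C.h j = N + 1 then y j k
          else P k j) * C.D) k j = (P * C.D) k j := by
        intro j hj k
        rw [Matrix.mul_apply, Matrix.mul_apply]
        refine Finset.sum_congr rfl fun l _ => ?_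
        by_cases hl : C.D l j = 0
        · simp [hl]
        obtain ⟨e, he⟩ := exists_mem_support hl
        have := (C.homog l j e he).1
        rw [hP' l (by omega)]
      refine ⟨Matrix.of fun k j => if C.h j = N + 1 then y j k else P k j, ?_, ?_, ?_⟩
      · intro j hj k
        rw [hPD j hj]
        by_cases hjN : C.h j = N + 1
        · have := congrFun (hy j hjN).1 k
          rw [← this, Matrix.mul_apply]
          simp [Matrix.mulVec, dotProduct, hjN]
        · rw [← h₁ j (by omega), Matrix.mul_apply, Matrix.mul_apply]
          exact Finset.sum_congr rfl fun l _ => by rw [hP' j (by omega)]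
      · intro j hj
        by_cases hjN : C.h j = N + 1
        · have := (hy j hjN).2
          simpa [hjN] using this
        · have := h₂ j (by omega)
          simpa [hjN] using this
      · intro k
        rw [hP' C.o (by rw [(C.h_eq_zero C.o).2 rfl]; omega), h₃]
  obtain ⟨P, h₁, h₂, h₃⟩ := key (∑ j, C.h j)
  have hle : ∀ j, C.h j ≤ ∑ j, C.h j :=
    fun j => Finset.single_le_sum (f := C.h) (fun _ _ => Nat.zero_le _) (Finset.mem_univ j)
  exact ⟨P, by ext1 k j; exact h₁ j (hle j) k, fun j => h₂ j (hle j), h₃⟩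

/-- A chain endomorphism `f` that is the identity in homological degree `0` is homotopic to the
identity. The homotopy is kept off the coordinate `o`, which is harmless because `D` kills the
basis vector `o`. -/
lemma exists_homotopy (f : Matrix J J (MvPolynomial (Fin n) K)) (hf : C.D * f = f * C.D)
    (hfo : ∀ k, f k C.o = if k = C.o then 1 else 0) (hfo' : ∀ j, j ≠ C.o → f C.o j = 0) :
    ∃ H : Matrix J J (MvPolynomial (Fin n) K), C.D * H + H * C.D = f - 1 := by
  have key : ∀ N : ℕ, ∃ H : Matrix J J (MvPolynomial (Fin n) K),
      (∀ j, C.h j < N → ∀ k, (C.D * H + H * C.D) k j = (f - 1) k j) ∧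
      (∀ j, H C.o j = 0) := by
    intro N
    induction N with
    | zero => exact ⟨0, fun j hj => absurd hj (by omega), fun j => rfl⟩
    | succ N ih =>
      obtain ⟨H, h₁, h₂⟩ := ih
      have low : ∀ j, C.h j = N → ∀ k, C.D k j ≠ 0 → C.h k < N := by
        intro j hj k hne
        obtain ⟨e, he⟩ := exists_mem_support hne
        have := (C.homog k j e he).1
        omega
      have step : ∀ j, ∃ y : J → MvPolynomial (Fin n) K, C.h j = N →
          (C.D.mulVec y = fun k => (f - 1 - H * C.D) k j) ∧ y C.o = 0 := by
        intro j
        by_cases hj : C.h j = N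
        swap
        · exact ⟨0, fun h => absurd h hj⟩
        have hex := C.exact (fun k => (f - 1 - H * C.D) k j) ?_ ?_
        · obtain ⟨y, hy⟩ := hex
          refine ⟨fun k => if k = C.o then 0 else y k, fun _ => ⟨?_, by simp⟩⟩
          rw [← hy]
          funext k
          refine Finset.sum_congr rfl fun l _ => ?_
          by_cases hl : l = C.o
          · subst hl; simp [D_col_o]
          · simp [hl]
        · have : C.D.mulVec (fun k => (f - 1 - H * C.D) k j) =
              fun k => (C.D * (f - 1 - H * C.D)) k j := rfl
          rw [this]
          have e1 : C.D * (f - 1 - H * C.D) = (f - 1 - C.D * H) * C.D := by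
            simp only [mul_sub, sub_mul, hf, mul_one, one_mul, mul_assoc]
          funext k
          have e2 : ((f - 1 - C.D * H) * C.D) k j = (H * C.D * C.D) k j := by
            rw [Matrix.mul_apply, Matrix.mul_apply]
            refine Finset.sum_congr rfl fun l _ => ?_
            by_cases hl : C.D l j = 0
            · simp [hl]
            · have := h₁ l (low j hj l hl) k
              rw [Matrix.sub_apply, ← this, Matrix.add_apply, add_sub_cancel_left]
          rw [e1, e2, mul_assoc, C.sq, mul_zero]
          rfl
        · have e3 : (H * C.D) C.o j = 0 := by simp [Matrix.mul_apply, h₂]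
          have e4 : (f - 1 - H * C.D) C.o j = 0 := by
            rw [Matrix.sub_apply, Matrix.sub_apply, e3]
            by_cases hjo : j = C.o
            · subst hjo; simp [hfo]
            · simp [hfo' j hjo, Matrix.one_apply_ne (Ne.symm hjo)]
          rw [e4]
          exact Ideal.zero_mem _
      choose y hy using step
      have hH' : ∀ j, C.h j < N → ∀ k, (Matrix.of fun k j => if C.h j = N then y j k
          else H k j) k j = H k j := by
        intro j hj k
        simp [show C.h j ≠ N by omega]
      have hHD : ∀ j, C.h j < N + 1 → ∀ k, ((Matrix.of fun k j => if C.h j = N then y j k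
          else H k j) * C.D) k j = (H * C.D) k j := by
        intro j hj k
        rw [Matrix.mul_apply, Matrix.mul_apply]
        refine Finset.sum_congr rfl fun l _ => ?_
        by_cases hl : C.D l j = 0
        · simp [hl]
        obtain ⟨e, he⟩ := exists_mem_support hl
        have := (C.homog l j e he).1
        rw [hH' l (by omega)]
      refine ⟨Matrix.of fun k j => if C.h j = N then y j k else H k j, ?_, ?_⟩
      · intro j hj k
        rw [Matrix.add_apply, hHD j hj]
        by_cases hjN : C.h j = N
        · have := congrFun (hy j hjN).1 k
          have e5 : (C.D * (Matrix.of fun k j => if C.h j = N then y j k else H k j)) k j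
              = C.D.mulVec (y j) k := by
            rw [Matrix.mul_apply]
            simp [Matrix.mulVec, dotProduct, hjN]
          rw [e5, this, Matrix.sub_apply, sub_add_cancel]
        · rw [← h₁ j (by omega), Matrix.add_apply, Matrix.mul_apply, Matrix.mul_apply]
          congr 1
          exact Finset.sum_congr rfl fun l _ => by rw [hH' j (by omega)]
      · intro j
        by_cases hjN : C.h j = N
        · simpa [hjN] using (hy j hjN).2
        · simpa [hjN] using h₂ j
  obtain ⟨H, h₁, -⟩ := key (∑ j, C.h j + 1)
  have hle : ∀ j, C.h j < ∑ j, C.h j + 1 := fun j => Nat.lt_succ_of_le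
    (Finset.single_le_sum (f := C.h) (fun _ _ => Nat.zero_le _) (Finset.mem_univ j))
  exact ⟨H, by ext1 k j; exact h₁ j (hle j) k⟩

/-- Modulo the maximal ideal, the comparison map is injective and preserves both degrees, so it
bounds the number of basis vectors of each bidegree. -/
lemma card_le (i : ℕ) (s : Fin d → ℕ) :
    Fintype.card {j : J // C.h j = i ∧ C.δ j = s} ≤
      Fintype.card {j : J' // C'.h j = i ∧ C'.δ j = s} := by
  obtain ⟨P, hP, hPd, hPo⟩ := C.exists_lift C'
  obtain ⟨Q, hQ, hQd, hQo⟩ := C'.exists_lift C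
  obtain ⟨H, hH⟩ := C.exists_homotopy (Q * P)
    (by rw [← Matrix.mul_assoc, hQ, Matrix.mul_assoc, hP, Matrix.mul_assoc])
    (fun k => by simp [Matrix.mul_apply, hPo, hQo]) (by
      intro j hj
      rw [Matrix.mul_apply]
      refine Finset.sum_eq_zero fun k _ => ?_
      by_contra hne
      obtain ⟨e, he⟩ := exists_mem_support (left_ne_zero_of_mul hne)
      obtain ⟨e', he'⟩ := exists_mem_support (right_ne_zero_of_mul hne)
      have a1 := (hQd k C.o e he).1
      have a2 := (hPd j k e' he').1
      rw [(C.h_eq_zero C.o).2 rfl] at a1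
      exact hj ((C.h_eq_zero j).1 (by omega)))
  let c : MvPolynomial (Fin n) K →+* K := constantCoeff
  have hD0 : C.D.map c = 0 := by
    ext k j
    exact C.minimal k j
  have hone : Q.map c * P.map c = 1 := by
    have h1 : Q * P = 1 + (C.D * H + H * C.D) := by rw [hH]; abel
    have h2 := congrArg (fun M : Matrix J J _ => M.map c) h1
    simp only [Matrix.map_mul, Matrix.map_add c (map_add c), hD0, zero_mul, mul_zero,
      add_zero] at h2
    rw [h2]
    exact Matrix.map_one c (map_zero c) (map_one c)
  -- the constant terms of `P` vanish off the diagonal bidegree blocks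
  have hPc : ∀ k j, P.map c k j ≠ 0 → C'.h k = C.h j ∧ C'.δ k = C.δ j := by
    intro k j hne
    have := hPd j k 0 (mem_support_iff.2 hne)
    rw [gammaDeg_zero, zero_add] at this
    exact this
  let A : Matrix {j : J' // C'.h j = i ∧ C'.δ j = s} {j : J // C.h j = i ∧ C.δ j = s} K :=
    (P.map c).submatrix Subtype.val Subtype.val
  let B : Matrix {j : J // C.h j = i ∧ C.δ j = s} {j : J' // C'.h j = i ∧ C'.δ j = s} K :=
    (Q.map c).submatrix Subtype.val Subtype.val
  have hBA : B * A = 1 := by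
    ext x y
    have := congrFun (congrFun hone x.1) y.1
    rw [Matrix.mul_apply] at this ⊢
    rw [Matrix.one_apply] at this ⊢
    simp only [Subtype.ext_iff]
    rw [← this]
    refine Fintype.sum_of_injective Subtype.val Subtype.val_injective _ _ ?_ fun _ => rfl
    intro k hk
    by_contra hne
    have := hPc k y.1 (right_ne_zero_of_mul hne)
    exact hk ⟨⟨k, by rw [this.1, y.2.1], by rw [this.2, y.2.2]⟩, rfl⟩
  calc Fintype.card {j : J // C.h j = i ∧ C.δ j = s} = (B * A).rank := by
        rw [hBA, Matrix.rank_one]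
    _ ≤ A.rank := Matrix.rank_mul_le_right B A
    _ ≤ _ := Matrix.rank_le_card_height A

/-- The multiset of `Γ`-degrees of the basis vectors of homological degree `i`. -/
def betti (i : ℕ) : Multiset (Fin d → ℕ) := ∑ j, if C.h j = i then {C.δ j} else 0

lemma count_betti (i : ℕ) (s : Fin d → ℕ) :
    (C.betti i).count s = Fintype.card {j : J // C.h j = i ∧ C.δ j = s} := by
  rw [betti, Multiset.count_sum', Fintype.card_subtype, Finset.card_filter]
  refine Finset.sum_congr rfl fun j _ => ?_
  by_cases h1 : C.h j = i
  · simp [h1, Multiset.count_singleton, eq_comm]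
  · simp [h1]

/-- The multiset of Betti degrees does not depend on the minimal resolution. -/
lemma betti_unique (i : ℕ) : C.betti i = C'.betti i := by
  ext s
  rw [count_betti, count_betti]
  exact le_antisymm (C.card_le C' i s) (C'.card_le C i s)

end BasedRes

end Uniqueness

/-! ### A minimal free resolution as a based resolution -/

section Total

variable {K : Type*} [Field K] {n d : ℕ} {a : Fin n → Fin d → ℕ}

namespace MinFreeRes

variable (F : MinFreeRes K a)

/-- The basis vectors of all the free modules of the resolution together. -/
abbrev Idx : Type := Σ i : ℕ, Fin (F.β i)

instance : Finite F.Idx := by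
  obtain ⟨N, hN⟩ := F.bdd
  have hlt : ∀ x : F.Idx, x.1 < N := by
    rintro ⟨i, j⟩
    by_contra hle
    have := hN i (not_lt.1 hle)
    exact absurd j.2 (by omega)
  refine Finite.of_injective
    (fun x : F.Idx => (⟨⟨x.1, hlt x⟩, x.2⟩ : Σ i : Fin N, Fin (F.β i))) ?_
  rintro ⟨i, j⟩ ⟨i', j'⟩ hxy
  simp only [Sigma.mk.injEq, Fin.mk.injEq] at hxy
  obtain ⟨rfl, h2⟩ := hxy
  rw [eq_of_heq h2]

instance : Fintype F.Idx := Fintype.ofFinite _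

/-- The matrix of the total differential. -/
def totalMat : Matrix F.Idx F.Idx (MvPolynomial (Fin n) K) :=
  Matrix.of fun k j => if hkj : j.1 = k.1 + 1 then
    F.mat k.1 (Fin.cast (congrArg F.β hkj) j.2) k.2 else 0

lemma totalMat_succ (i : ℕ) (b : Fin (F.β (i + 1))) (c : Fin (F.β i)) :
    F.totalMat ⟨i, c⟩ ⟨i + 1, b⟩ = F.mat i b c := by
  simp [totalMat]

lemma totalMat_of_ne (k j : F.Idx) (hkj : j.1 ≠ k.1 + 1) : F.totalMat k j = 0 := by
  simp [totalMat, hkj]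

lemma totalMat_mulVec (x : F.Idx → MvPolynomial (Fin n) K) (i : ℕ) (c : Fin (F.β i)) :
    F.totalMat.mulVec x ⟨i, c⟩ =
      Matrix.mulVecLin (Matrix.of fun j' j => F.mat i j j') (fun b => x ⟨i + 1, b⟩) c := by
  symm
  refine Fintype.sum_of_injective (fun b : Fin (F.β (i + 1)) => (⟨i + 1, b⟩ : F.Idx))
    (fun _ _ hb => eq_of_heq (Sigma.mk.inj hb).2) _ _ ?_ ?_
  · rintro ⟨l, b⟩ hl
    dsimp only
    rw [totalMat_of_ne, zero_mul]
    rintro h1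
    dsimp only at h1
    subst h1
    exact hl ⟨b, rfl⟩
  · intro b
    dsimp only
    rw [totalMat_succ]
    rfl

/-- The basis vector of the rank one module in homological degree `0`. -/
def origin : F.Idx := ⟨0, Fin.cast F.β0.symm 0⟩

lemma eq_origin (c : Fin (F.β 0)) : (⟨0, c⟩ : F.Idx) = F.origin := by
  have : Subsingleton (Fin (F.β 0)) := by rw [F.β0]; infer_instance
  rw [origin, Subsingleton.elim c]

lemma mem_ker_aug (x : F.Idx → MvPolynomial (Fin n) K) :
    (fun c => x ⟨0, c⟩) ∈ LinearMap.ker ((toricIdeal K a).mkQ ∘ₗ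
        (LinearMap.lsum (MvPolynomial (Fin n) K)
            (fun _ : Fin (F.β 0) => MvPolynomial (Fin n) K) ℕ)
          fun _ => LinearMap.id) ↔ x F.origin ∈ toricIdeal K a := by
  have hs : (∑ c : Fin (F.β 0), x ⟨0, c⟩) = x F.origin := by
    have : ∀ c : Fin (F.β 0), x ⟨0, c⟩ = x F.origin := fun c => by rw [F.eq_origin c]
    simp [this, F.β0]
  rw [LinearMap.mem_ker, LinearMap.comp_apply, Submodule.mkQ_apply,
    Submodule.Quotient.mk_eq_zero]
  simp [LinearMap.lsum_apply, hs]

/-- The based resolution underlying a minimal free resolution. -/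
def toBased : BasedRes K a F.Idx where
  h := Sigma.fst
  δ := fun j => F.deg j.1 j.2
  D := F.totalMat
  o := F.origin
  h_eq_zero := by
    rintro ⟨i, c⟩
    constructor
    · rintro h0
      dsimp only at h0
      subst h0
      exact F.eq_origin c
    · intro h0
      rw [h0]; rfl
  δ_o := F.deg0 _
  homog := by
    rintro ⟨i, c⟩ ⟨l, b⟩ e he
    by_cases hl : l = i + 1
    · subst hl
      rw [totalMat_succ] at he
      exact ⟨rfl, F.homog i b c e he⟩
    · rw [totalMat_of_ne _ _ _ hl] at he
      simp at he
  minimal := by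
    rintro ⟨i, c⟩ ⟨l, b⟩
    by_cases hl : l = i + 1
    · subst hl
      rw [totalMat_succ]
      exact F.minimal i b c
    · rw [totalMat_of_ne _ _ _ hl]
      simp
  sq := by
    have hz : ∀ x, F.totalMat.mulVec (F.totalMat.mulVec x) = 0 := by
      intro x
      funext ⟨i, c⟩
      rw [totalMat_mulVec]
      have hmem : (fun b => F.totalMat.mulVec x ⟨i + 1, b⟩) ∈
          LinearMap.ker (Matrix.mulVecLin (Matrix.of fun j' j => F.mat i j j')) := by
        rw [F.exact_succ i]
        exact ⟨fun b => x ⟨i + 1 + 1, b⟩, funext fun b => (F.totalMat_mulVec x (i + 1) b).symm⟩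
      rw [LinearMap.mem_ker] at hmem
      rw [hmem]
      rfl
    refine Matrix.ext_of_mulVec_single fun j => ?_
    rw [← Matrix.mulVec_mulVec, hz, Matrix.zero_mulVec]
  aug := by
    intro j
    have h1 : F.totalMat.mulVec (Pi.single j 1) F.origin = F.totalMat F.origin j := by
      rw [Matrix.mulVec_single_one]; rfl
    rw [← h1, ← mem_ker_aug, F.exact_zero]
    exact ⟨_, funext fun b => (F.totalMat_mulVec _ 0 b).symm⟩
  exact := by
    intro x hx ho
    have h0 : ∃ y : Fin (F.β 1) → MvPolynomial (Fin n) K,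
        Matrix.mulVecLin (Matrix.of fun j' j => F.mat 0 j j') y = fun c => x ⟨0, c⟩ := by
      rw [← mem_ker_aug, F.exact_zero] at ho
      exact ho
    have hs : ∀ i, ∃ y : Fin (F.β (i + 1)) → MvPolynomial (Fin n) K,
        Matrix.mulVecLin (Matrix.of fun j' j => F.mat i j j') y = fun c => x ⟨i, c⟩ := by
      rintro (_ | i)
      · exact h0
      · have hmem : (fun b => x ⟨i + 1, b⟩) ∈
            LinearMap.ker (Matrix.mulVecLin (Matrix.of fun j' j => F.mat i j j')) := by
          rw [LinearMap.mem_ker]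
          funext c
          rw [← F.totalMat_mulVec, hx]
          rfl
        rw [F.exact_succ i] at hmem
        exact hmem
    choose y hy using hs
    refine ⟨fun j => match j with
      | ⟨0, _⟩ => 0
      | ⟨i + 1, b⟩ => y i b, ?_⟩
    funext ⟨i, c⟩
    rw [totalMat_mulVec]
    exact congrFun (hy i) c

lemma betti_toBased (i : ℕ) : F.toBased.betti i = F.Betti i := by
  have h1 : F.Betti i = ∑ b : Fin (F.β i), {F.deg i b} := by
    rw [Betti, Finset.sum]
    conv_lhs => rw [← Multiset.sum_map_singleton (Multiset.map (F.deg i) _), Multiset.map_map]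
    rfl
  rw [h1]
  symm
  refine Fintype.sum_of_injective (fun b : Fin (F.β i) => (⟨i, b⟩ : F.Idx))
    (fun _ _ hb => eq_of_heq (Sigma.mk.inj hb).2) _ _ ?_ ?_
  · rintro ⟨l, b⟩ hl
    refine if_neg ?_
    rintro h1
    change l = i at h1
    subst h1
    exact hl ⟨b, rfl⟩
  · intro b
    exact (if_pos rfl).symm

end MinFreeRes

end Total

/-! ### Contractions over the field -/

section Contraction

variable {K : Type*} [Field K] {V W : Type*} [AddCommGroup V] [Module K V]
  [AddCommGroup W] [Module K W]

lemma exists_pseudoinverse (f : V →ₗ[K] W) : ∃ g : W →ₗ[K] V, ∀ x, f (g (f x)) = f x := by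
  obtain ⟨g, hg⟩ := f.rangeRestrict.exists_rightInverse_of_surjective f.range_rangeRestrict
  obtain ⟨g', hg'⟩ := LinearMap.exists_extend g
  refine ⟨g', fun x => ?_⟩
  have h1 : g' (f x) = g (f.rangeRestrict x) := by
    rw [← hg']; rfl
  have h2 := LinearMap.congr_fun hg (f.rangeRestrict x)
  rw [h1]
  exact congrArg Subtype.val h2

/-- A differential `D` over a field whose homology is carried by the projection `p` is
contractible onto `p`. The contraction can be taken to anticommute with a sign involution `σ`
by averaging it (and in characteristic two the requirement is empty). -/
lemma exists_contraction (D p σ : Module.End K V) (hDD : D * D = 0) (hDp : D * p = 0)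
    (hpD : p * D = 0) (hpp : p * p = p) (hex : ∀ x, D x = 0 → p x = 0 → ∃ y, D y = x)
    (hσσ : σ * σ = 1) (hσD : σ * D = -(D * σ)) (hσp : σ * p = p) (hpσ : p * σ = p)
    (hσ2 : (2 : K) = 0 → σ = 1) :
    ∃ h : Module.End K V, D * h + h * D = 1 - p ∧ σ * h + h * σ = 0 := by
  obtain ⟨s₀, hs₀⟩ := exists_pseudoinverse D
  have hs₀' : D * s₀ * D = D := LinearMap.ext hs₀
  let s : Module.End K V := (1 - p) * s₀
  have hs : D * s * D = D := by
    simp only [s, ← mul_assoc, mul_sub, mul_one, hDp, sub_zero, hs₀']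
  have hps : p * s = 0 := by
    simp only [s, ← mul_assoc, mul_sub, mul_one, hpp, sub_self, zero_mul]
  let w : Module.End K V := 1 - p - s * D
  have hDw : D * w = 0 := by
    simp only [w, mul_sub, mul_one, hDp, sub_zero, ← mul_assoc, hs, sub_self]
  have hpw : p * w = 0 := by
    simp only [w, mul_sub, mul_one, hpp, sub_self, ← mul_assoc, hps, zero_mul]
  have hDsw : D * s * w = w := by
    ext x
    obtain ⟨y, hy⟩ := hex (w x) (LinearMap.congr_fun hDw x) (LinearMap.congr_fun hpw x)
    have := LinearMap.congr_fun hs y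
    simp only [Module.End.mul_apply] at this ⊢
    rw [← hy, this]
  have hwD : w * D = D := by
    simp only [w, sub_mul, one_mul, hpD, mul_assoc, hDD, mul_zero, sub_zero]
  have hh : D * (s * w) + s * w * D = 1 - p := by
    rw [mul_assoc s, hwD, ← mul_assoc, hDsw]
    simp [w]
  generalize s * w = h at hh
  by_cases h2 : (2 : K) = 0
  · refine ⟨h, hh, ?_⟩
    rw [hσ2 h2, one_mul, mul_one]
    ext x
    have : ((2 : K) • h x) = 0 := by rw [h2, zero_smul]
    rw [two_smul] at this
    exact this
  · refine ⟨(2 : K)⁻¹ • (h - σ * h * σ), ?_, ?_⟩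
    · have hDσ : D * σ = -(σ * D) := by rw [hσD, neg_neg]
      have e1 : D * (σ * h * σ) + σ * h * σ * D = -(σ * (D * h + h * D) * σ) := by
        calc D * (σ * h * σ) + σ * h * σ * D = (D * σ) * h * σ + σ * h * (σ * D) := by
              noncomm_ring
          _ = -(σ * D) * h * σ + σ * h * -(D * σ) := by
              rw [show D * σ * h * σ = -(σ * D) * h * σ by rw [hDσ], hσD]
          _ = _ := by noncomm_ring
      have e2 : σ * (1 - p) * σ = 1 - p := by
        rw [mul_sub, mul_one, sub_mul, hσσ, hσp, hpσ]
      have e3 : D * (h - σ * h * σ) + (h - σ * h * σ) * D = (2 : K) • (1 - p) := by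
        rw [mul_sub, sub_mul, sub_add_sub_comm, hh, e1, hh, e2, two_smul, sub_neg_eq_add]
      rw [mul_smul_comm, smul_mul_assoc, ← smul_add, e3, smul_smul, inv_mul_cancel₀ h2, one_smul]
    · have e1 : σ * (h - σ * h * σ) + (h - σ * h * σ) * σ = 0 := by
        calc σ * (h - σ * h * σ) + (h - σ * h * σ) * σ
            = σ * h - (σ * σ) * h * σ + (h * σ - σ * h * (σ * σ)) := by noncomm_ring
          _ = 0 := by rw [hσσ]; noncomm_ring
      rw [mul_smul_comm, smul_mul_assoc, ← smul_add, e1, smul_zero]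

variable {V' : Type*} [AddCommGroup V'] [Module K V']

open scoped TensorProduct in
/-- Künneth: contractions of two differentials give one of their tensor product. -/
lemma tensor_contraction (D₁ p₁ σ h₁ : Module.End K V) (D₂ p₂ h₂ : Module.End K V')
    (hDp : D₁ * p₁ = 0) (hpD : p₁ * D₁ = 0) (hσp : σ * p₁ = p₁) (hpσ : p₁ * σ = p₁)
    (hh₁ : D₁ * h₁ + h₁ * D₁ = 1 - p₁) (hσh : σ * h₁ + h₁ * σ = 0)
    (hh₂ : D₂ * h₂ + h₂ * D₂ = 1 - p₂) :
    (TensorProduct.map D₁ 1 + TensorProduct.map σ D₂ : Module.End K (V ⊗[K] V')) *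
        (TensorProduct.map h₁ 1 + TensorProduct.map p₁ h₂) +
      (TensorProduct.map h₁ 1 + TensorProduct.map p₁ h₂) *
        (TensorProduct.map D₁ 1 + TensorProduct.map σ D₂) = 1 - TensorProduct.map p₁ p₂ := by
  have e : ∀ (f g : Module.End K V) (f' g' : Module.End K V'),
      (TensorProduct.map f f' * TensorProduct.map g g' : Module.End K (V ⊗[K] V')) =
        TensorProduct.map (f * g) (f' * g') :=
    fun f g f' g' => (TensorProduct.map_mul f g f' g').symm
  simp only [mul_add, add_mul, e, hDp, hpD, hσp, hpσ, mul_one, one_mul,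
    TensorProduct.map_zero_left, zero_add, add_zero]
  have a1 : TensorProduct.map (D₁ * h₁) 1 + TensorProduct.map (h₁ * D₁) 1 =
      (TensorProduct.map (1 - p₁) 1 : Module.End K (V ⊗[K] V')) := by
    rw [← TensorProduct.map_add_left, hh₁]
  have a2 : TensorProduct.map (σ * h₁) D₂ + TensorProduct.map (h₁ * σ) D₂ =
      (0 : Module.End K (V ⊗[K] V')) := by
    rw [← TensorProduct.map_add_left, hσh, TensorProduct.map_zero_left]
  have a3 : TensorProduct.map p₁ (D₂ * h₂) + TensorProduct.map p₁ (h₂ * D₂) =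
      (TensorProduct.map p₁ (1 - p₂) : Module.End K (V ⊗[K] V')) := by
    rw [← TensorProduct.map_add_right, hh₂]
  have a4 : (TensorProduct.map (1 - p₁) 1 : Module.End K (V ⊗[K] V')) +
      TensorProduct.map p₁ (1 - p₂) = 1 - TensorProduct.map p₁ p₂ := by
    ext v w
    simp [TensorProduct.sub_tmul, TensorProduct.tmul_sub]
  rw [← a4, ← a1, ← a3]
  rw [← sub_eq_zero]
  calc _ = TensorProduct.map (σ * h₁) D₂ + TensorProduct.map (h₁ * σ) D₂ := by abel
    _ = 0 := a2

end Contraction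

/-! ### Polynomial rings and semigroup rings of the join -/

section Tensor

open scoped TensorProduct

variable {K : Type*} [Field K] {m₁ m₂ r : ℕ}

/-- The parametrization `x_i ↦ t^{a_i}` whose kernel is the toric ideal. -/
def toricMap (K : Type*) [Field K] {n d : ℕ} (a : Fin n → Fin d → ℕ) :
    MvPolynomial (Fin n) K →ₐ[K] MvPolynomial (Fin d) K :=
  MvPolynomial.aeval
      (fun i => MvPolynomial.monomial (Finsupp.equivFunOnFinite.symm (a i)) (1 : K))

lemma mem_toricIdeal {n d : ℕ} {a : Fin n → Fin d → ℕ} {p : MvPolynomial (Fin n) K} :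
    p ∈ toricIdeal K a ↔ toricMap K a p = 0 := Iff.rfl

/-- The inclusion of the polynomial ring of `Γ₁` in that of the join. -/
def inclL (K : Type*) [Field K] (m₁ m₂ : ℕ) :
    MvPolynomial (Fin m₁) K →ₐ[K] MvPolynomial (Fin (m₁ + m₂)) K := rename (Fin.castAdd m₂)

/-- The inclusion of the polynomial ring of `Γ₂` in that of the join. -/
def inclR (K : Type*) [Field K] (m₁ m₂ : ℕ) :
    MvPolynomial (Fin m₂) K →ₐ[K] MvPolynomial (Fin (m₁ + m₂)) K := rename (Fin.natAdd m₁)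

lemma toricMap_inclL (g₁ : Fin m₁ → Fin r → ℕ) (g₂ : Fin m₂ → Fin r → ℕ)
    (p : MvPolynomial (Fin m₁) K) :
    toricMap K (Fin.append g₁ g₂) (inclL K m₁ m₂ p) = toricMap K g₁ p := by
  rw [toricMap, inclL, aeval_rename]
  simp only [Function.comp_def, Fin.append_left]
  rfl

lemma toricMap_inclR (g₁ : Fin m₁ → Fin r → ℕ) (g₂ : Fin m₂ → Fin r → ℕ)
    (p : MvPolynomial (Fin m₂) K) :
    toricMap K (Fin.append g₁ g₂) (inclR K m₁ m₂ p) = toricMap K g₂ p := by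
  rw [toricMap, inclR, aeval_rename]
  simp only [Function.comp_def, Fin.append_right]
  rfl

/-- Concatenation of exponent vectors. -/
def joinExp (e₁ : Fin m₁ →₀ ℕ) (e₂ : Fin m₂ →₀ ℕ) : Fin (m₁ + m₂) →₀ ℕ :=
  e₁.mapDomain (Fin.castAdd m₂) + e₂.mapDomain (Fin.natAdd m₁)

lemma castAdd_ne_natAdd (i : Fin m₁) (j : Fin m₂) : Fin.castAdd m₂ i ≠ Fin.natAdd m₁ j := by
  intro hij
  have := congrArg Fin.val hij
  simp only [Fin.val_castAdd, Fin.val_natAdd] at this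
  omega

lemma joinExp_castAdd (e₁ : Fin m₁ →₀ ℕ) (e₂ : Fin m₂ →₀ ℕ) (i : Fin m₁) :
    joinExp e₁ e₂ (Fin.castAdd m₂ i) = e₁ i := by
  rw [joinExp, Finsupp.add_apply, Finsupp.mapDomain_apply (Fin.castAdd_injective m₁ m₂),
    Finsupp.mapDomain_of_notMem_range, add_zero]
  rintro ⟨j, hj⟩
  exact castAdd_ne_natAdd i j hj.symm

lemma joinExp_natAdd (e₁ : Fin m₁ →₀ ℕ) (e₂ : Fin m₂ →₀ ℕ) (i : Fin m₂) :
    joinExp e₁ e₂ (Fin.natAdd m₁ i) = e₂ i := by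
  rw [joinExp, Finsupp.add_apply, Finsupp.mapDomain_apply (Fin.natAdd_injective m₂ m₁),
    Finsupp.mapDomain_of_notMem_range, zero_add]
  rintro ⟨j, hj⟩
  exact castAdd_ne_natAdd j i hj

lemma gammaDeg_joinExp (g₁ : Fin m₁ → Fin r → ℕ) (g₂ : Fin m₂ → Fin r → ℕ)
    (e₁ : Fin m₁ →₀ ℕ) (e₂ : Fin m₂ →₀ ℕ) :
    gammaDeg (Fin.append g₁ g₂) (joinExp e₁ e₂) = gammaDeg g₁ e₁ + gammaDeg g₂ e₂ := by
  simp [gammaDeg, Fin.sum_univ_add, joinExp_castAdd, joinExp_natAdd]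

lemma mem_support_inclL {p : MvPolynomial (Fin m₁) K} {e : Fin (m₁ + m₂) →₀ ℕ}
    (he : e ∈ (inclL K m₁ m₂ p).support) : ∃ e₁ ∈ p.support, e = joinExp e₁ 0 := by
  rw [inclL, support_rename_of_injective (Fin.castAdd_injective m₁ m₂)] at he
  obtain ⟨e₁, h1, rfl⟩ := Finset.mem_image.1 he
  exact ⟨e₁, h1, by simp [joinExp]⟩

lemma mem_support_inclR {p : MvPolynomial (Fin m₂) K} {e : Fin (m₁ + m₂) →₀ ℕ}
    (he : e ∈ (inclR K m₁ m₂ p).support) : ∃ e₂ ∈ p.support, e = joinExp 0 e₂ := by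
  rw [inclR, support_rename_of_injective (Fin.natAdd_injective m₂ m₁)] at he
  obtain ⟨e₁, h1, rfl⟩ := Finset.mem_image.1 he
  exact ⟨e₁, h1, by simp [joinExp]⟩

lemma inclL_mul_inclR_monomial (e₁ : Fin m₁ →₀ ℕ) (e₂ : Fin m₂ →₀ ℕ) :
    inclL K m₁ m₂ (monomial e₁ 1) * inclR K m₁ m₂ (monomial e₂ 1) =
      monomial (joinExp e₁ e₂) 1 := by
  simp [inclL, inclR, rename_monomial, monomial_mul, joinExp]

/-- The index bijection between tensors of monomial basis vectors and monomial basis vectors of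
the tensor product. -/
def joinIdx (J₁ J₂ : Type) (m₁ m₂ : ℕ) :
    ((Σ _ : J₁, (Fin m₁ →₀ ℕ)) × (Σ _ : J₂, (Fin m₂ →₀ ℕ))) ≃
      (Σ _ : J₁ × J₂, (Fin (m₁ + m₂) →₀ ℕ)) where
  toFun x := ⟨(x.1.1, x.2.1), joinExp x.1.2 x.2.2⟩
  invFun x := (⟨x.1.1, x.2.comapDomain (Fin.castAdd m₂) (Fin.castAdd_injective m₁ m₂).injOn⟩,
    ⟨x.1.2, x.2.comapDomain (Fin.natAdd m₁) (Fin.natAdd_injective m₂ m₁).injOn⟩)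
  left_inv := by
    rintro ⟨⟨j₁, e₁⟩, ⟨j₂, e₂⟩⟩
    have h1 : (joinExp e₁ e₂).comapDomain (Fin.castAdd m₂)
        (Fin.castAdd_injective m₁ m₂).injOn = e₁ := by
      ext i; simp [joinExp_castAdd]
    have h2 : (joinExp e₁ e₂).comapDomain (Fin.natAdd m₁)
        (Fin.natAdd_injective m₂ m₁).injOn = e₂ := by
      ext i; simp [joinExp_natAdd]
    simp only [h1, h2]
  right_inv := by
    rintro ⟨⟨j₁, j₂⟩, e⟩
    have h1 : joinExp (e.comapDomain (Fin.castAdd m₂) (Fin.castAdd_injective m₁ m₂).injOn)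
        (e.comapDomain (Fin.natAdd m₁) (Fin.natAdd_injective m₂ m₁).injOn) = e := by
      ext i
      refine Fin.addCases (fun i => ?_) (fun i => ?_) i
      · simp [joinExp_castAdd]
      · simp [joinExp_natAdd]
    simp only [h1]

variable (K) in
/-- The bilinear map `(v, w) ↦ (v_{j₁} w_{j₂})` on vectors of polynomials. -/
def joinBilin (J₁ J₂ : Type) (m₁ m₂ : ℕ) :
    (J₁ → MvPolynomial (Fin m₁) K) ⊗[K] (J₂ → MvPolynomial (Fin m₂) K) →ₗ[K]
      (J₁ × J₂ → MvPolynomial (Fin (m₁ + m₂)) K) :=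
  TensorProduct.lift (LinearMap.mk₂ K
    (fun v w j => inclL K m₁ m₂ (v j.1) * inclR K m₁ m₂ (w j.2))
    (fun v v' w => by funext j; simp [add_mul])
    (fun c v w => by funext j; simp)
    (fun v w w' => by funext j; simp [mul_add])
    (fun c v w => by funext j; simp))

lemma joinBilin_tmul (J₁ J₂ : Type) (v : J₁ → MvPolynomial (Fin m₁) K)
    (w : J₂ → MvPolynomial (Fin m₂) K) (j : J₁ × J₂) :
    joinBilin K J₁ J₂ m₁ m₂ (v ⊗ₜ w) j = inclL K m₁ m₂ (v j.1) * inclR K m₁ m₂ (w j.2) := rfl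

/-- The map `joinBilin` is bijective because it carries a monomial basis to a monomial basis. -/
lemma joinBilin_bijective (J₁ J₂ : Type) [Fintype J₁] [DecidableEq J₁] [Fintype J₂]
    [DecidableEq J₂] (m₁ m₂ : ℕ) : Function.Bijective (joinBilin K J₁ J₂ m₁ m₂) := by
  let b₁ := Pi.basis (fun _ : J₁ => basisMonomials (Fin m₁) K)
  let b₂ := Pi.basis (fun _ : J₂ => basisMonomials (Fin m₂) K)
  let b := Pi.basis (fun _ : J₁ × J₂ => basisMonomials (Fin (m₁ + m₂)) K)
  let Θ := (b₁.tensorProduct b₂).equiv b (joinIdx J₁ J₂ m₁ m₂)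
  have hΘ : joinBilin K J₁ J₂ m₁ m₂ = Θ.toLinearMap := by
    refine (b₁.tensorProduct b₂).ext ?_
    rintro ⟨⟨j₁, e₁⟩, ⟨j₂, e₂⟩⟩
    rw [LinearEquiv.coe_coe, Module.Basis.equiv_apply, Module.Basis.tensorProduct_apply]
    funext ⟨k₁, k₂⟩
    rw [joinBilin_tmul]
    simp only [b₁, b₂, b, Pi.basis_apply, coe_basisMonomials, joinIdx, Equiv.coe_fn_mk]
    by_cases h1 : k₁ = j₁
    · by_cases h2 : k₂ = j₂
      · subst h1 h2
        simp only [Pi.single_eq_same]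
        exact inclL_mul_inclR_monomial e₁ e₂
      · have : (k₁, k₂) ≠ (j₁, j₂) := fun hh => h2 (congrArg Prod.snd hh)
        simp [Pi.single_eq_of_ne h2, Pi.single_eq_of_ne this]
    · have : (k₁, k₂) ≠ (j₁, j₂) := fun hh => h1 (congrArg Prod.fst hh)
      simp [Pi.single_eq_of_ne h1, Pi.single_eq_of_ne this]
  rw [hΘ]
  exact Θ.bijective

/-- Additively, `Γ₁` and `Γ₂` are independent: `(v, w) ↦ v + w` is injective on `Γ₁ × Γ₂`. -/
def Separated (g₁ : Fin m₁ → Fin r → ℕ) (g₂ : Fin m₂ → Fin r → ℕ) : Prop :=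
  Set.InjOn (fun v : (Fin r →₀ ℕ) × (Fin r →₀ ℕ) => v.1 + v.2)
    {v | ⇑v.1 ∈ affSemigroup g₁ ∧ ⇑v.2 ∈ affSemigroup g₂}

lemma toricMap_support {n : ℕ} (g : Fin n → Fin r → ℕ) (p : MvPolynomial (Fin n) K) :
    ∀ e ∈ (toricMap K g p).support, ⇑e ∈ affSemigroup g := by
  suffices toricMap K g p ∈ restrictSupport K {e : Fin r →₀ ℕ | ⇑e ∈ affSemigroup g} by
    intro e he
    exact (mem_restrictSupport_iff K).1 this he
  rw [p.as_sum, map_sum]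
  refine Submodule.sum_mem _ fun e _ => ?_
  have h1 : toricMap K g (monomial e (coeff e p)) =
      monomial (∑ i, e i • Finsupp.equivFunOnFinite.symm (g i)) (coeff e p) := by
    rw [toricMap, aeval_monomial, Finsupp.prod_fintype _ _ (fun i => pow_zero _)]
    simp only [monomial_pow, one_pow]
    rw [← monomial_sum_one, algebraMap_eq, C_mul_monomial, mul_one]
  rw [h1, monomial_mem_restrictSupport]
  left
  have h2 : ⇑(∑ i, e i • Finsupp.equivFunOnFinite.symm (g i)) = ∑ i, e i • g i := by
    rw [Finsupp.coe_finsetSum]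
    rfl
  rw [Set.mem_ofPred_eq, h2]
  exact AddSubmonoid.sum_mem _ fun i _ =>
    AddSubmonoid.nsmul_mem _ 
      (AddSubmonoid.subset_closure (Set.mem_range_self i) : g i ∈ affSemigroup g) _

/-- If `Γ₁` and `Γ₂` are independent, then multiplication `K[Γ₁] ⊗ K[Γ₂] → K[t]` is injective: it
maps the basis of pairs of monomials injectively to monomials. Here an element of the source is
presented as the image of `z` under `f₁ ⊗ f₂`. -/
lemma map_toric_eq_zero {g₁ : Fin m₁ → Fin r → ℕ} {g₂ : Fin m₂ → Fin r → ℕ}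
    (hsep : Separated g₁ g₂) {V₁ V₂ : Type*} [AddCommGroup V₁] [Module K V₁]
    [AddCommGroup V₂] [Module K V₂] (f₁ : V₁ →ₗ[K] MvPolynomial (Fin r) K)
    (f₂ : V₂ →ₗ[K] MvPolynomial (Fin r) K) (hf₁ : ∀ v, ∃ p, f₁ v = toricMap K g₁ p)
    (hf₂ : ∀ v, ∃ p, f₂ v = toricMap K g₂ p) (z : V₁ ⊗[K] V₂)
    (hz : LinearMap.mul' K (MvPolynomial (Fin r) K)
      (TensorProduct.map f₁ f₂ z) = 0) :
    TensorProduct.map f₁ f₂ z = 0 := by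
  let b := basisMonomials (Fin r) K
  let B := b.tensorProduct b
  have hmul : ∀ w, b.repr (LinearMap.mul' K _ w) =
      Finsupp.lmapDomain K K (fun v : (Fin r →₀ ℕ) × (Fin r →₀ ℕ) => v.1 + v.2) (B.repr w) := by
    intro w
    have : b.repr.toLinearMap ∘ₗ LinearMap.mul' K _ =
        Finsupp.lmapDomain K K (fun v : (Fin r →₀ ℕ) × (Fin r →₀ ℕ) => v.1 + v.2) ∘ₗ
          B.repr.toLinearMap := by
      refine B.ext ?_
      rintro ⟨e, f⟩
      have h1 : LinearMap.mul' K _ (B (e, f)) = b (e + f) := by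
        simp [B, b, Module.Basis.tensorProduct_apply, monomial_mul]
      rw [LinearMap.comp_apply, h1]
      simp [Finsupp.mapDomain_single]
    exact LinearMap.congr_fun this w
  have hsupp : ∀ z : V₁ ⊗[K] V₂, B.repr (TensorProduct.map f₁ f₂ z) ∈ Finsupp.supported K K
      {v : (Fin r →₀ ℕ) × (Fin r →₀ ℕ) | ⇑v.1 ∈ affSemigroup g₁ ∧ ⇑v.2 ∈ affSemigroup g₂} := by
    intro z
    induction z using TensorProduct.induction_on with
    | zero => rw [map_zero, map_zero]; exact Submodule.zero_mem _
    | add x y hx hy =>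
      rw [map_add, map_add]
      exact Submodule.add_mem _ hx hy
    | tmul v w =>
      rw [Finsupp.mem_supported]
      rintro ⟨e, f⟩ hef
      rw [Finset.mem_coe, Finsupp.mem_support_iff, TensorProduct.map_tmul,
        Module.Basis.tensorProduct_repr_tmul_apply] at hef
      obtain ⟨p₁, hp₁⟩ := hf₁ v
      obtain ⟨p₂, hp₂⟩ := hf₂ w
      rw [hp₁, hp₂] at hef
      exact ⟨toricMap_support g₁ p₁ e (mem_support_iff.2 (right_ne_zero_of_mul hef)),
        toricMap_support g₂ p₂ f (mem_support_iff.2 (left_ne_zero_of_mul hef))⟩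
  have h0 : B.repr (TensorProduct.map f₁ f₂ z) = 0 := by
    refine Finsupp.mapDomain_injOn _ hsep (hsupp z) (by simp) ?_
    have := hmul (TensorProduct.map f₁ f₂ z)
    rw [hz, map_zero] at this
    rw [Finsupp.mapDomain_zero]
    exact this.symm
  exact B.repr.map_eq_zero_iff.1 h0

end Tensor

/-! ### The tensor product of two based resolutions -/

section TensorRes

open scoped TensorProduct

variable {K : Type*} [Field K]

namespace BasedRes

section Operators

variable {n d : ℕ} {a : Fin n → Fin d → ℕ} {J : Type} [Fintype J] [DecidableEq J]
  (C : BasedRes K a J)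

/-- The differential as a `K`-linear map. -/
def dEnd : Module.End K (J → MvPolynomial (Fin n) K) := (Matrix.mulVecLin C.D).restrictScalars K

lemma dEnd_apply (x : J → MvPolynomial (Fin n) K) : C.dEnd x = C.D.mulVec x := rfl

/-- The sign involution, `(-1)^i` in homological degree `i`. -/
def sgn : Module.End K (J → MvPolynomial (Fin n) K) :=
  LinearMap.pi fun j => ((-1 : K) ^ C.h j) • LinearMap.proj j

lemma sgn_apply (x : J → MvPolynomial (Fin n) K) (j : J) : C.sgn x j = (-1 : K) ^ C.h j • x j := rfl

/-- The augmentation onto `K[Γ]`, embedded in `K[t]`. -/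
def augMap : (J → MvPolynomial (Fin n) K) →ₗ[K] MvPolynomial (Fin d) K :=
  (toricMap K a).toLinearMap ∘ₗ LinearMap.proj C.o

lemma augMap_apply (x : J → MvPolynomial (Fin n) K) : C.augMap x = toricMap K a (x C.o) := rfl

/-- A `K`-linear section of the augmentation onto its image, placed at the basis vector `o`. -/
def augSec (τ : MvPolynomial (Fin d) K →ₗ[K] MvPolynomial (Fin n) K) :
    MvPolynomial (Fin d) K →ₗ[K] (J → MvPolynomial (Fin n) K) :=
  LinearMap.single K (fun _ : J => MvPolynomial (Fin n) K) C.o ∘ₗ τ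

lemma augSec_apply (τ : MvPolynomial (Fin d) K →ₗ[K] MvPolynomial (Fin n) K)
    (p : MvPolynomial (Fin d) K) : C.augSec τ p = Pi.single C.o (τ p) := rfl

lemma h_o : C.h C.o = 0 := (C.h_eq_zero C.o).2 rfl

lemma dEnd_sq : C.dEnd * C.dEnd = 0 := by
  refine LinearMap.ext fun x => ?_
  rw [Module.End.mul_apply, dEnd_apply, dEnd_apply, Matrix.mulVec_mulVec, C.sq, Matrix.zero_mulVec]
  rfl

lemma sgn_dEnd : C.sgn * C.dEnd = -(C.dEnd * C.sgn) := by
  refine LinearMap.ext fun x => funext fun k => ?_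
  have h1 : ∀ j, (-1 : K) ^ C.h k • (C.D k j * x j) = -(C.D k j * (-1 : K) ^ C.h j • x j) := by
    intro j
    by_cases h0 : C.D k j = 0
    · simp [h0]
    · obtain ⟨e, he⟩ := exists_mem_support h0
      rw [(C.homog k j e he).1, pow_succ, mul_neg_one, neg_smul, mul_neg, neg_neg, mul_smul_comm]
  rw [Module.End.mul_apply, sgn_apply, LinearMap.neg_apply, Pi.neg_apply, Module.End.mul_apply,
    dEnd_apply, dEnd_apply]
  simp only [Matrix.mulVec, dotProduct, Finset.smul_sum, h1, sgn_apply, Finset.sum_neg_distrib]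

lemma augMap_dEnd (x : J → MvPolynomial (Fin n) K) : C.augMap (C.dEnd x) = 0 := by
  rw [augMap_apply, dEnd_apply, Matrix.mulVec, dotProduct, map_sum]
  refine Finset.sum_eq_zero fun j _ => ?_
  rw [map_mul, mem_toricIdeal.1 (C.aug j), zero_mul]

lemma dEnd_augSec (τ : MvPolynomial (Fin d) K →ₗ[K] MvPolynomial (Fin n) K)
    (p : MvPolynomial (Fin d) K) : C.dEnd (C.augSec τ p) = 0 := by
  rw [dEnd_apply, augSec_apply]
  funext k
  rw [Matrix.mulVec, dotProduct]
  refine Finset.sum_eq_zero fun j _ => ?_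
  by_cases hj : j = C.o
  · rw [hj, C.D_col_o, zero_mul]
  · rw [Pi.single_eq_of_ne hj, mul_zero]

lemma sgn_augSec (τ : MvPolynomial (Fin d) K →ₗ[K] MvPolynomial (Fin n) K)
    (p : MvPolynomial (Fin d) K) : C.sgn (C.augSec τ p) = C.augSec τ p := by
  funext j
  rw [sgn_apply, augSec_apply]
  by_cases hj : j = C.o
  · rw [hj, C.h_o, pow_zero, one_smul]
  · rw [Pi.single_eq_of_ne hj, smul_zero]

lemma augMap_sgn (x : J → MvPolynomial (Fin n) K) : C.augMap (C.sgn x) = C.augMap x := by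
  rw [augMap_apply, augMap_apply, sgn_apply, C.h_o, pow_zero, one_smul]

lemma sgn_sq : C.sgn * C.sgn = 1 := by
  refine LinearMap.ext fun x => funext fun k => ?_
  rw [Module.End.mul_apply, sgn_apply, sgn_apply, smul_smul, ← mul_pow]
  simp

/-- The composite of the augmentation with its section: a projection of the complex onto a copy
of its homology. -/
def augProj (τ : MvPolynomial (Fin d) K →ₗ[K] MvPolynomial (Fin n) K) :
    Module.End K (J → MvPolynomial (Fin n) K) := C.augSec τ ∘ₗ C.augMap

lemma augProj_apply (τ : MvPolynomial (Fin d) K →ₗ[K] MvPolynomial (Fin n) K)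
    (x : J → MvPolynomial (Fin n) K) : C.augProj τ x = C.augSec τ (C.augMap x) := rfl

lemma dEnd_mul_augProj (τ : MvPolynomial (Fin d) K →ₗ[K] MvPolynomial (Fin n) K) :
    C.dEnd * C.augProj τ = 0 := by
  refine LinearMap.ext fun x => ?_
  rw [Module.End.mul_apply, augProj_apply, dEnd_augSec, LinearMap.zero_apply]

lemma augProj_mul_dEnd (τ : MvPolynomial (Fin d) K →ₗ[K] MvPolynomial (Fin n) K) :
    C.augProj τ * C.dEnd = 0 := by
  refine LinearMap.ext fun x => ?_
  rw [Module.End.mul_apply, augProj_apply, augMap_dEnd, map_zero, LinearMap.zero_apply]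

lemma sgn_mul_augProj (τ : MvPolynomial (Fin d) K →ₗ[K] MvPolynomial (Fin n) K) :
    C.sgn * C.augProj τ = C.augProj τ := by
  refine LinearMap.ext fun x => ?_
  rw [Module.End.mul_apply, augProj_apply, sgn_augSec]

lemma augProj_mul_sgn (τ : MvPolynomial (Fin d) K →ₗ[K] MvPolynomial (Fin n) K) :
    C.augProj τ * C.sgn = C.augProj τ := by
  refine LinearMap.ext fun x => ?_
  rw [Module.End.mul_apply, augProj_apply, augProj_apply, augMap_sgn]

/-- Over `K`, the resolution contracts onto a copy of `K[Γ]`. -/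
lemma exists_augProj_contraction : ∃ τ : MvPolynomial (Fin d) K →ₗ[K] MvPolynomial (Fin n) K,
    ∃ h : Module.End K (J → MvPolynomial (Fin n) K),
      C.dEnd * h + h * C.dEnd = 1 - C.augProj τ ∧ C.sgn * h + h * C.sgn = 0 := by
  obtain ⟨τ, hτ⟩ := exists_pseudoinverse (toricMap K a).toLinearMap
  have hτ' : ∀ x, C.augMap (C.augSec τ (C.augMap x)) = C.augMap x := by
    intro x
    rw [augMap_apply, augSec_apply, Pi.single_eq_same]
    exact hτ _
  refine ⟨τ, exists_contraction C.dEnd (C.augProj τ) C.sgn C.dEnd_sq (C.dEnd_mul_augProj τ)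
    (C.augProj_mul_dEnd τ) ?_ ?_ C.sgn_sq C.sgn_dEnd (C.sgn_mul_augProj τ) (C.augProj_mul_sgn τ)
    ?_⟩
  · refine LinearMap.ext fun x => ?_
    rw [Module.End.mul_apply, augProj_apply, augProj_apply, hτ']
  · intro x hx hp
    refine C.exact x hx ?_
    rw [mem_toricIdeal, ← augMap_apply, ← hτ' x]
    rw [augProj_apply] at hp
    rw [hp, map_zero]
  · intro h2
    have h3 : (-1 : K) = 1 := by
      rw [neg_eq_iff_add_eq_zero, one_add_one_eq_two, h2]
    refine LinearMap.ext fun x => funext fun k => ?_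
    rw [sgn_apply, h3, one_pow, one_smul]
    rfl

end Operators

variable {m₁ m₂ r : ℕ} {g₁ : Fin m₁ → Fin r → ℕ} {g₂ : Fin m₂ → Fin r → ℕ}
  {J₁ J₂ : Type} [Fintype J₁] [DecidableEq J₁] [Fintype J₂] [DecidableEq J₂]
  (C₁ : BasedRes K g₁ J₁) (C₂ : BasedRes K g₂ J₂)

/-- The matrix of `D₁ ⊗ 1 + σ₁ ⊗ D₂`, where `σ₁` is the sign involution. -/
def tensorMat : Matrix (J₁ × J₂) (J₁ × J₂) (MvPolynomial (Fin (m₁ + m₂)) K) :=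
  Matrix.of fun k j => (if k.2 = j.2 then inclL K m₁ m₂ (C₁.D k.1 j.1) else 0) +
    if k.1 = j.1 then (-1 : K) ^ C₁.h j.1 • inclR K m₁ m₂ (C₂.D k.2 j.2) else 0

lemma tensorMat_apply (k j : J₁ × J₂) : tensorMat C₁ C₂ k j =
    (if k.2 = j.2 then inclL K m₁ m₂ (C₁.D k.1 j.1) else 0) +
    if k.1 = j.1 then (-1 : K) ^ C₁.h j.1 • inclR K m₁ m₂ (C₂.D k.2 j.2) else 0 := rfl

/-- The differential of the tensor product over `K`. -/
def tensorD : Module.End K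
    ((J₁ → MvPolynomial (Fin m₁) K) ⊗[K] (J₂ → MvPolynomial (Fin m₂) K)) :=
  TensorProduct.map C₁.dEnd 1 + TensorProduct.map C₁.sgn C₂.dEnd

lemma tensorD_tmul (v : J₁ → MvPolynomial (Fin m₁) K) (w : J₂ → MvPolynomial (Fin m₂) K) :
    tensorD C₁ C₂ (v ⊗ₜ w) = C₁.dEnd v ⊗ₜ w + C₁.sgn v ⊗ₜ C₂.dEnd w := rfl

lemma tensorD_sq : tensorD C₁ C₂ * tensorD C₁ C₂ = 0 := by
  have h1 : ∀ v, C₁.dEnd (C₁.dEnd v) = 0 := fun v => LinearMap.congr_fun C₁.dEnd_sq v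
  have h2 : ∀ v, C₂.dEnd (C₂.dEnd v) = 0 := fun v => LinearMap.congr_fun C₂.dEnd_sq v
  have h3 : ∀ v, C₁.sgn (C₁.dEnd v) = - C₁.dEnd (C₁.sgn v) :=
    fun v => LinearMap.congr_fun C₁.sgn_dEnd v
  refine TensorProduct.ext' fun v w => ?_
  rw [Module.End.mul_apply, tensorD_tmul, map_add, tensorD_tmul, tensorD_tmul, h1, h2, h3,
    TensorProduct.zero_tmul, TensorProduct.tmul_zero, TensorProduct.neg_tmul]
  simp

/-- Under `joinBilin`, the matrix `tensorMat` is the differential of the tensor product. -/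
lemma tensorMat_mulVec (z : (J₁ → MvPolynomial (Fin m₁) K) ⊗[K] (J₂ → MvPolynomial (Fin m₂) K)) :
    (tensorMat C₁ C₂).mulVec (joinBilin K J₁ J₂ m₁ m₂ z) =
      joinBilin K J₁ J₂ m₁ m₂ (tensorD C₁ C₂ z) := by
  induction z using TensorProduct.induction_on with
  | zero => simp
  | add x y hx hy => simp only [map_add, Matrix.mulVec_add, hx, hy]
  | tmul v w =>
    rw [tensorD_tmul, map_add]
    funext ⟨k₁, k₂⟩
    rw [Pi.add_apply, joinBilin_tmul, joinBilin_tmul, sgn_apply, dEnd_apply, dEnd_apply]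
    simp only [Matrix.mulVec, dotProduct, tensorMat_apply, joinBilin_tmul, add_mul,
      Finset.sum_add_distrib, Fintype.sum_prod_type, ite_mul, zero_mul, map_sum, map_mul,
      Finset.sum_mul, Finset.mul_sum, Finset.sum_ite_eq, Finset.mem_univ, if_true, map_smul]
    congr 1
    · refine Finset.sum_congr rfl fun j _ => ?_
      ring
    · rw [Finset.sum_comm]
      refine Finset.sum_congr rfl fun j _ => ?_
      rw [Finset.sum_ite_eq, if_pos (Finset.mem_univ _), smul_mul_assoc, smul_mul_assoc]
      congr 1
      ring

lemma toricMap_joinBilin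
    (z : (J₁ → MvPolynomial (Fin m₁) K) ⊗[K] (J₂ → MvPolynomial (Fin m₂) K)) :
    LinearMap.mul' K (MvPolynomial (Fin r) K) (TensorProduct.map C₁.augMap C₂.augMap z) =
      toricMap K (Fin.append g₁ g₂) (joinBilin K J₁ J₂ m₁ m₂ z (C₁.o, C₂.o)) := by
  induction z using TensorProduct.induction_on with
  | zero => simp
  | add x y hx hy => simp only [map_add, Pi.add_apply, hx, hy]
  | tmul v w =>
    rw [TensorProduct.map_tmul, LinearMap.mul'_apply, joinBilin_tmul, map_mul, toricMap_inclL,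
      toricMap_inclR]
    rfl

/-- Exactness comes from a `K`-linear contraction of the tensor product onto a copy of
`K[Γ₁] ⊗ K[Γ₂]`, and the latter embeds in `K[t]` since the semigroups are independent. -/
lemma tensorMat_exact (hsep : Separated g₁ g₂) (x : J₁ × J₂ → MvPolynomial (Fin (m₁ + m₂)) K)
    (hx : (tensorMat C₁ C₂).mulVec x = 0)
    (ho : toricMap K (Fin.append g₁ g₂) (x (C₁.o, C₂.o)) = 0) :
    ∃ y, (tensorMat C₁ C₂).mulVec y = x := by
  obtain ⟨hinj, hsurj⟩ := joinBilin_bijective (K := K) J₁ J₂ m₁ m₂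
  obtain ⟨z, rfl⟩ := hsurj x
  rw [tensorMat_mulVec] at hx
  have hz : tensorD C₁ C₂ z = 0 := hinj (by rw [hx, map_zero])
  obtain ⟨τ₁, h₁, hh₁, hσ₁⟩ := C₁.exists_augProj_contraction
  obtain ⟨τ₂, h₂, hh₂, -⟩ := C₂.exists_augProj_contraction
  have hmul := toricMap_joinBilin C₁ C₂ z
  rw [ho] at hmul
  have haug : TensorProduct.map C₁.augMap C₂.augMap z = 0 :=
    map_toric_eq_zero hsep C₁.augMap C₂.augMap (fun v => ⟨_, C₁.augMap_apply v⟩)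
      (fun v => ⟨_, C₂.augMap_apply v⟩) z hmul
  have hproj : TensorProduct.map (C₁.augProj τ₁) (C₂.augProj τ₂) z = 0 := by
    rw [augProj, augProj, TensorProduct.map_comp, LinearMap.comp_apply, haug, map_zero]
  have hcon := LinearMap.congr_fun (tensor_contraction C₁.dEnd (C₁.augProj τ₁) C₁.sgn h₁ C₂.dEnd
    (C₂.augProj τ₂) h₂ (C₁.dEnd_mul_augProj τ₁) (C₁.augProj_mul_dEnd τ₁) (C₁.sgn_mul_augProj τ₁)
    (C₁.augProj_mul_sgn τ₁) hh₁ hσ₁ hh₂) z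
  rw [← tensorD, LinearMap.add_apply, Module.End.mul_apply, Module.End.mul_apply, hz, map_zero,
    add_zero, LinearMap.sub_apply, hproj, sub_zero, Module.End.one_apply] at hcon
  exact ⟨joinBilin K J₁ J₂ m₁ m₂ _,
    (tensorMat_mulVec C₁ C₂ _).trans (congrArg (joinBilin K J₁ J₂ m₁ m₂) hcon)⟩

/-- The tensor product of the resolutions of `K[Γ₁]` and `K[Γ₂]` over `K`, which resolves the
semigroup ring of the join. -/
def tensor (hsep : Separated g₁ g₂) : BasedRes K (Fin.append g₁ g₂) (J₁ × J₂) where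
  h j := C₁.h j.1 + C₂.h j.2
  δ j := C₁.δ j.1 + C₂.δ j.2
  D := tensorMat C₁ C₂
  o := (C₁.o, C₂.o)
  h_eq_zero := by
    rintro ⟨j₁, j₂⟩
    rw [Nat.add_eq_zero_iff, C₁.h_eq_zero, C₂.h_eq_zero, Prod.mk.injEq]
  δ_o := by
    simp only [C₁.δ_o, C₂.δ_o, add_zero]
  homog := by
    rintro ⟨k₁, k₂⟩ ⟨j₁, j₂⟩ e he
    classical
    rw [tensorMat_apply] at he
    dsimp only at he ⊢
    rcases Finset.mem_union.1 (support_add he) with he | he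
    · split_ifs at he with hk
      · obtain ⟨e₁, he₁, rfl⟩ := mem_support_inclL he
        obtain ⟨h1, h2⟩ := C₁.homog _ _ _ he₁
        refine ⟨by rw [h1, hk]; omega, ?_⟩
        rw [h2, hk, gammaDeg_joinExp, gammaDeg_zero]
        abel
      · simp at he
    · split_ifs at he with hk
      · obtain ⟨e₂, he₂, rfl⟩ := mem_support_inclR (support_smul he)
        obtain ⟨h1, h2⟩ := C₂.homog _ _ _ he₂
        refine ⟨by rw [h1, hk]; omega, ?_⟩
        rw [h2, hk, gammaDeg_joinExp, gammaDeg_zero]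
        abel
      · simp at he
  minimal := by
    rintro ⟨k₁, k₂⟩ ⟨j₁, j₂⟩
    have h1 : coeff 0 (inclL K m₁ m₂ (C₁.D k₁ j₁)) = 0 := by
      rw [← constantCoeff_eq, inclL, constantCoeff_rename]
      exact C₁.minimal _ _
    have h2 : coeff 0 (inclR K m₁ m₂ (C₂.D k₂ j₂)) = 0 := by
      rw [← constantCoeff_eq, inclR, constantCoeff_rename]
      exact C₂.minimal _ _
    rw [tensorMat_apply, coeff_add]
    dsimp only
    split_ifs <;> simp [h1, h2]
  sq := by
    refine Matrix.ext_of_mulVec_single fun j => ?_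
    obtain ⟨z, hz⟩ := (joinBilin_bijective (K := K) J₁ J₂ m₁ m₂).2 (Pi.single j 1)
    rw [← hz, ← Matrix.mulVec_mulVec, tensorMat_mulVec, tensorMat_mulVec, Matrix.zero_mulVec,
      ← Module.End.mul_apply, tensorD_sq]
    simp
  aug := by
    rintro ⟨j₁, j₂⟩
    have h1 : toricMap K (Fin.append g₁ g₂) (inclL K m₁ m₂ (C₁.D C₁.o j₁)) = 0 := by
      rw [toricMap_inclL]
      exact C₁.aug j₁
    have h2 : toricMap K (Fin.append g₁ g₂) (inclR K m₁ m₂ (C₂.D C₂.o j₂)) = 0 := by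
      rw [toricMap_inclR]
      exact C₂.aug j₂
    rw [mem_toricIdeal, tensorMat_apply, map_add]
    dsimp only
    split_ifs <;> simp [h1, h2]
  exact := by
    exact fun x hx ho => tensorMat_exact C₁ C₂ hsep x hx (mem_toricIdeal.1 ho)

lemma tensor_betti (hsep : Separated g₁ g₂) (i : ℕ) :
    (tensor C₁ C₂ hsep).betti i = ∑ p ∈ Finset.range (i + 1),
      (C₁.betti p).bind fun v => (C₂.betti (i - p)).map fun w => v + w := by
  have hbind : ∀ (s : Multiset (Fin r → ℕ)) (p : ℕ),
      (C₁.betti p).bind (fun v => s.map fun w => v + w) =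
        ∑ j₁, if C₁.h j₁ = p then s.map (fun w => C₁.δ j₁ + w) else 0 := by
    intro s p
    let φ : Multiset (Fin r → ℕ) →+ Multiset (Fin r → ℕ) :=
      { toFun := fun t => t.bind fun v => s.map fun w => v + w
        map_zero' := Multiset.zero_bind _
        map_add' := fun t t' => Multiset.add_bind t t' _ }
    change φ (C₁.betti p) = _
    rw [betti, map_sum]
    refine Finset.sum_congr rfl fun j₁ _ => ?_
    split_ifs
    · exact Multiset.singleton_bind _ _
    · exact map_zero φ
  have hmap : ∀ (u : Fin r → ℕ) (q : ℕ), (C₂.betti q).map (fun w => u + w) =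
      ∑ j₂, if C₂.h j₂ = q then {u + C₂.δ j₂} else 0 := by
    intro u q
    rw [betti, ← Multiset.coe_mapAddMonoidHom, map_sum]
    refine Finset.sum_congr rfl fun j₂ _ => ?_
    split_ifs
    · simp
    · simp
  simp only [hbind]
  simp only [hmap]
  rw [Finset.sum_comm, betti, Fintype.sum_prod_type]
  refine Finset.sum_congr rfl fun j₁ _ => ?_
  by_cases h1 : C₁.h j₁ ≤ i
  · rw [Finset.sum_eq_single (C₁.h j₁), if_pos rfl]
    · refine Finset.sum_congr rfl fun j₂ _ => ?_
      refine if_congr ?_ rfl rfl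
      change C₁.h j₁ + C₂.h j₂ = i ↔ _
      omega
    · intro p _ hp
      exact if_neg (Ne.symm hp)
    · intro hp
      exact absurd (Finset.mem_range.2 (Nat.lt_succ_of_le h1)) hp
  · rw [Finset.sum_eq_zero, Finset.sum_eq_zero]
    · intro p hp
      rw [Finset.mem_range] at hp
      exact if_neg (by omega)
    · intro j₂ _
      refine if_neg ?_
      change ¬ C₁.h j₁ + C₂.h j₂ = i
      omega

end BasedRes

end TensorRes

/-! ### The Betti degrees of the join -/

/-- Linear independence of the extremal rays makes the two semigroups independent. -/
lemma separated_of_rays {r r₁ n₁ r₂ n₂ : ℕ}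
    (g₁ : Fin (r₁ + n₁) → Fin r → ℕ) (g₂ : Fin (r₂ + n₂) → Fin r → ℕ)
    (hray₁ : ∀ v ∈ affSemigroup g₁, ∃ c : Fin r₁ → ℚ, (∀ t, 0 ≤ c t) ∧
      ∀ j, (v j : ℚ) = ∑ t, c t * (g₁ (Fin.castAdd n₁ t) j : ℚ))
    (hray₂ : ∀ v ∈ affSemigroup g₂, ∃ c : Fin r₂ → ℚ, (∀ t, 0 ≤ c t) ∧
      ∀ j, (v j : ℚ) = ∑ t, c t * (g₂ (Fin.castAdd n₂ t) j : ℚ))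
    (hindep : LinearIndependent ℚ
      (Sum.elim (fun t : Fin r₁ => fun j => (g₁ (Fin.castAdd n₁ t) j : ℚ))
        (fun t : Fin r₂ => fun j => (g₂ (Fin.castAdd n₂ t) j : ℚ)))) :
    Separated g₁ g₂ := by
  rintro ⟨v, w⟩ ⟨hv, hw⟩ ⟨v', w'⟩ ⟨hv', hw'⟩ heq
  dsimp only at hv hw hv' hw' heq
  obtain ⟨c, -, hc⟩ := hray₁ v hv
  obtain ⟨c', -, hc'⟩ := hray₁ v' hv'
  obtain ⟨e, -, he⟩ := hray₂ w hw
  obtain ⟨e', -, he'⟩ := hray₂ w' hw'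
  have hsum := Fintype.linearIndependent_iff.1 hindep
    (Sum.elim (fun t => c t - c' t) (fun t => e t - e' t)) (by
      funext j
      have h1 : (v j : ℚ) + w j = v' j + w' j := by
        have := DFunLike.congr_fun heq j
        rw [Finsupp.add_apply, Finsupp.add_apply] at this
        exact_mod_cast this
      rw [hc, hc', he, he'] at h1
      simp only [Fintype.sum_sum_type, Sum.elim_inl, Sum.elim_inr,
        Finset.sum_apply, Pi.smul_apply, smul_eq_mul, sub_mul, Finset.sum_sub_distrib,
        Pi.zero_apply]
      linarith)
  have hcc : ∀ t, c t = c' t := fun t => sub_eq_zero.1 (hsum (Sum.inl t))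
  have hee : ∀ t, e t = e' t := fun t => sub_eq_zero.1 (hsum (Sum.inr t))
  have hvv : v = v' := by
    ext j
    have : (v j : ℚ) = v' j := by rw [hc, hc']; simp only [hcc]
    exact_mod_cast this
  have hww : w = w' := by
    ext j
    have : (w j : ℚ) = w' j := by rw [he, he']; simp only [hee]
    exact_mod_cast this
  rw [hvv, hww]

theorem betti_degrees_of_join
    {K : Type*} [Field K] {r r₁ n₁ r₂ n₂ : ℕ}
    (g₁ : Fin (r₁ + n₁) → Fin r → ℕ) (g₂ : Fin (r₂ + n₂) → Fin r → ℕ)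
    -- `Γ₁`, `Γ₂` are minimally generated by `𝒢₁`, `𝒢₂`:
    (hmin₁ : ∀ i, g₁ i ∉ AddSubmonoid.closure (Set.range g₁ \ {g₁ i}))
    (hmin₂ : ∀ i, g₂ i ∉ AddSubmonoid.closure (Set.range g₂ \ {g₂ i}))
    -- the generating sets are disjoint:
    (hdisj : Disjoint (Set.range g₁) (Set.range g₂))
    -- the first `r₁` (resp. `r₂`) generators are the extremal rays: every element of
    -- `Γ₁` (resp. `Γ₂`) is a non-negative rational combination of them:
    (hray₁ : ∀ v ∈ affSemigroup g₁, ∃ c : Fin r₁ → ℚ, (∀ t, 0 ≤ c t) ∧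
      ∀ j, (v j : ℚ) = ∑ t, c t * (g₁ (Fin.castAdd n₁ t) j : ℚ))
    (hray₂ : ∀ v ∈ affSemigroup g₂, ∃ c : Fin r₂ → ℚ, (∀ t, 0 ≤ c t) ∧
      ∀ j, (v j : ℚ) = ∑ t, c t * (g₂ (Fin.castAdd n₂ t) j : ℚ))
    -- `E_{Γ₁} ∪ E_{Γ₂}` is linearly independent over `ℚ`:
    (hindep : LinearIndependent ℚ
      (Sum.elim (fun t : Fin r₁ => fun j => (g₁ (Fin.castAdd n₁ t) j : ℚ))
        (fun t : Fin r₂ => fun j => (g₂ (Fin.castAdd n₂ t) j : ℚ)))) :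
    -- then for minimal graded free resolutions `F` of `K[Γ₁ ⊔ Γ₂]`, `F₁` of `K[Γ₁]`
    -- and `F₂` of `K[Γ₂]`:  `ℬᵢ(Γ) = ⋃_{p₁+p₂=i} (ℬ_{p₁}(Γ₁) + ℬ_{p₂}(Γ₂))`
    -- (a multiset union of multisets of pairwise sums):
    ∀ (F : MinFreeRes K (Fin.append g₁ g₂)) (F₁ : MinFreeRes K g₁)
      (F₂ : MinFreeRes K g₂) (i : ℕ),
      F.Betti i =
        ∑ p ∈ Finset.range (i + 1),
          (F₁.Betti p).bind fun v => (F₂.Betti (i - p)).map fun w => v + w := by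
  intro F F₁ F₂ i
  have hsep : Separated g₁ g₂ := separated_of_rays g₁ g₂ hray₁ hray₂ hindep
  rw [← F.betti_toBased, BasedRes.betti_unique F.toBased (F₁.toBased.tensor F₂.toBased hsep),
    BasedRes.tensor_betti]
  simp only [MinFreeRes.betti_toBased]
end
end

section
/- Let Γ₁, Γ₂ ⊆ ℕ^r be affine semigroups whose join Γ = Γ₁ ⊔ Γ₂ is defined, and suppose both Γ₁ and Γ₂ have strongly indispensable minimal free resolutions. Let p+q = i = r+s and let b_{p,1} ∈ ℬ_p(Γ₁), b_{q,2} ∈ ℬ_q(Γ₂), b′_{r,1} ∈ ℬ_r(Γ₁), b′_{s,2} ∈ ℬ_s(Γ₂). If (b_{p,1} + b_{q,2}) − (b′_{r,1} + b′_{s,2}) ∈ Γ, then b_{p,1} − b′_{r,1} ∈ Γ₁ and b_{q,2} − b′_{s,2} ∈ Γ₂. -/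
/-!
The sublattices generated by `Γ₁` and `Γ₂` meet only in `0`, because the extremal rays of the two
semigroups span rational subspaces with trivial intersection (used through
`eq_of_add_eq_add_of_disjoint`). Every Betti degree of a minimal
free resolution lies in the semigroup itself (`MinFreeRes.deg_mem`): no column of a differential
vanishes, for otherwise a basis vector would be a cycle, hence a boundary, although all
boundaries have entries in the maximal ideal; a nonzero entry then writes a degree as the sum of an
element of `Γ` and a degree one step lower. Writing the difference as `γ₁ + γ₂` with `γₖ ∈ Γₖ`,
the relation `b₁ + b₂ = (γ₁ + γ₂) + (b₁' + b₂')` therefore splits into its two components.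
-/

open MvPolynomial

noncomputable section

set_option synthInstance.maxHeartbeats 1000000
set_option maxHeartbeats 1000000

/-- The strong indispensability condition for a minimal graded free resolution:
`±(b − b′) ∉ Γ` for all `i`-Betti `Γ`-degrees `b, b′ ∈ ℬᵢ(Γ)`, `1 ≤ i ≤ pd(Γ)`. -/
def SIFRCond {K : Type*} [Field K] {n d : ℕ} {a : Fin n → Fin d → ℕ}
    (F : MinFreeRes K a) : Prop :=
  ∀ i, 1 ≤ i → i ≤ F.pd → ∀ j j' : Fin (F.β i), j ≠ j' →
    ∀ γ ∈ affSemigroup a, F.deg i j ≠ γ + F.deg i j'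

/-- `Γ` has a strongly indispensable minimal free resolution (SIFR). -/
def HasSIFR (K : Type*) [Field K] {n d : ℕ} (a : Fin n → Fin d → ℕ) : Prop :=
  ∃ F : MinFreeRes K a, SIFRCond F

theorem gammaDeg_mem {n d : ℕ} (a : Fin n → Fin d → ℕ) (e : Fin n →₀ ℕ) :
    gammaDeg a e ∈ affSemigroup a :=
  sum_mem fun i _ => nsmul_mem (AddSubmonoid.subset_closure (Set.mem_range_self i)) _

/-- Minimality together with exactness rules out zero columns in the differentials. -/
theorem MinFreeRes.exists_mat_ne_zero {K : Type*} [Field K] {n d : ℕ} {a : Fin n → Fin d → ℕ}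
    (F : MinFreeRes K a) (i : ℕ) (j : Fin (F.β (i + 1))) : ∃ j', F.mat i j j' ≠ 0 := by
  by_contra! h
  have hker : (Pi.single j 1 : Fin (F.β (i + 1)) → MvPolynomial (Fin n) K) ∈
      LinearMap.ker (Matrix.mulVecLin (Matrix.of fun j' j => F.mat i j j')) := by
    rw [LinearMap.mem_ker]
    ext1 j'
    simp [h]
  rw [F.exact_succ i] at hker
  obtain ⟨w, hw⟩ := hker
  -- compare the constant coefficients of the `j`-th coordinates
  have h1 := congrArg constantCoeff (congrFun hw j)
  have hmin : ∀ k, constantCoeff (F.mat (i + 1) k j) = 0 := fun k => F.minimal (i + 1) k j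
  simp [Matrix.mulVec, dotProduct, hmin] at h1

theorem MinFreeRes.deg_mem {K : Type*} [Field K] {n d : ℕ} {a : Fin n → Fin d → ℕ}
    (F : MinFreeRes K a) (i : ℕ) (j : Fin (F.β i)) : F.deg i j ∈ affSemigroup a := by
  induction i with
  | zero => rw [F.deg0]; exact zero_mem _
  | succ i ih =>
    obtain ⟨j', hj'⟩ := F.exists_mat_ne_zero i j
    obtain ⟨e, he⟩ := MvPolynomial.support_nonempty.2 hj'
    rw [F.homog i j j' e he]
    exact add_mem (gammaDeg_mem a e) (ih j')

theorem exists_add_of_mem_append {m n d : ℕ} (a : Fin m → Fin d → ℕ) (b : Fin n → Fin d → ℕ)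
    {γ : Fin d → ℕ} (h : γ ∈ affSemigroup (Fin.append a b)) :
    ∃ x ∈ affSemigroup a, ∃ y ∈ affSemigroup b, x + y = γ := by
  rw [← AddSubmonoid.mem_sup]
  refine (AddSubmonoid.closure_le.2 ?_ :
    affSemigroup (Fin.append a b) ≤ affSemigroup a ⊔ affSemigroup b) h
  rintro _ ⟨k, rfl⟩
  induction k using Fin.addCases with
  | left k =>
    rw [Fin.append_left]
    exact AddSubmonoid.mem_sup_left (AddSubmonoid.subset_closure ⟨k, rfl⟩)
  | right k =>
    rw [Fin.append_right]
    exact AddSubmonoid.mem_sup_right (AddSubmonoid.subset_closure ⟨k, rfl⟩)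

theorem cast_mem_span {m d : ℕ} (u : Fin m → Fin d → ℕ) (v : Fin d → ℕ)
    (h : ∃ c : Fin m → ℚ, (∀ t, 0 ≤ c t) ∧ ∀ j, (v j : ℚ) = ∑ t, c t * (u t j : ℚ)) :
    (fun j => (v j : ℚ)) ∈ Submodule.span ℚ (Set.range fun t j => (u t j : ℚ)) := by
  obtain ⟨c, -, hc⟩ := h
  rw [Submodule.mem_span_range_iff_exists_fun]
  exact ⟨c, by ext j; simp [hc]⟩

/-- A relation between vectors from two disjoint rational subspaces splits componentwise. -/
theorem eq_of_add_eq_add_of_disjoint {d : ℕ} {S T : Submodule ℚ (Fin d → ℚ)} (hST : Disjoint S T)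
    {x x' y y' : Fin d → ℕ}
    (hx : (fun j => (x j : ℚ)) ∈ S) (hx' : (fun j => (x' j : ℚ)) ∈ S)
    (hy : (fun j => (y j : ℚ)) ∈ T) (hy' : (fun j => (y' j : ℚ)) ∈ T)
    (h : x + y = x' + y') : x = x' ∧ y = y' := by
  have hq : ∀ j, (x j : ℚ) + y j = x' j + y' j := fun j => by exact_mod_cast congrFun h j
  have hmem := S.sub_mem hx hx'
  have heq : ((fun j => (x j : ℚ)) - fun j => (x' j : ℚ)) =
      (fun j => (y' j : ℚ)) - fun j => (y j : ℚ) := by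
    ext j
    simp only [Pi.sub_apply]
    linarith [hq j]
  have h0 := Submodule.disjoint_def.1 hST _ hmem (heq ▸ T.sub_mem hy' hy)
  have hxx : x = x' := by
    ext j
    have := congrFun h0 j
    simp only [Pi.sub_apply, Pi.zero_apply, sub_eq_zero] at this
    exact_mod_cast this
  subst hxx
  exact ⟨rfl, add_left_cancel h⟩

theorem betti_difference_in_join_splits
    {K : Type*} [Field K] {r r₁ n₁ r₂ n₂ : ℕ}
    (g₁ : Fin (r₁ + n₁) → Fin r → ℕ) (g₂ : Fin (r₂ + n₂) → Fin r → ℕ)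
    -- `Γ₁`, `Γ₂` are minimally generated by `𝒢₁`, `𝒢₂`:
    (hmin₁ : ∀ i, g₁ i ∉ AddSubmonoid.closure (Set.range g₁ \ {g₁ i}))
    (hmin₂ : ∀ i, g₂ i ∉ AddSubmonoid.closure (Set.range g₂ \ {g₂ i}))
    -- the generating sets are disjoint:
    (hdisj : Disjoint (Set.range g₁) (Set.range g₂))
    -- the first `r₁` (resp. `r₂`) generators are the extremal rays: every element of
    -- `Γ₁` (resp. `Γ₂`) is a non-negative rational combination of them:
    (hray₁ : ∀ v ∈ affSemigroup g₁, ∃ c : Fin r₁ → ℚ, (∀ t, 0 ≤ c t) ∧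
      ∀ j, (v j : ℚ) = ∑ t, c t * (g₁ (Fin.castAdd n₁ t) j : ℚ))
    (hray₂ : ∀ v ∈ affSemigroup g₂, ∃ c : Fin r₂ → ℚ, (∀ t, 0 ≤ c t) ∧
      ∀ j, (v j : ℚ) = ∑ t, c t * (g₂ (Fin.castAdd n₂ t) j : ℚ))
    -- `E_{Γ₁} ∪ E_{Γ₂}` is linearly independent over `ℚ`:
    (hindep : LinearIndependent ℚ
      (Sum.elim (fun t : Fin r₁ => fun j => (g₁ (Fin.castAdd n₁ t) j : ℚ))
        (fun t : Fin r₂ => fun j => (g₂ (Fin.castAdd n₂ t) j : ℚ))))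
    -- `Γ₁` and `Γ₂` have strongly indispensable minimal free resolutions `F₁`, `F₂`:
    (F₁ : MinFreeRes K g₁) (F₂ : MinFreeRes K g₂)
    (hS₁ : SIFRCond F₁) (hS₂ : SIFRCond F₂)
    -- Betti `Γ`-degrees `b = b_{p,1} + b_{q,2}` and `b′ = b′_{r,1} + b′_{s,2}` with
    -- `p + q = i = r + s`:
    (p q rr s i : ℕ) (hpq : p + q = i) (hrs : rr + s = i)
    (jp : Fin (F₁.β p)) (jq : Fin (F₂.β q)) (jr : Fin (F₁.β rr)) (js : Fin (F₂.β s))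
    -- if `b − b′ ∈ Γ = Γ₁ ⊔ Γ₂` …
    (hdiff : ∃ γ ∈ affSemigroup (Fin.append g₁ g₂),
      F₁.deg p jp + F₂.deg q jq = γ + (F₁.deg rr jr + F₂.deg s js)) :
    -- … then `b_{p,1} − b′_{r,1} ∈ Γ₁` and `b_{q,2} − b′_{s,2} ∈ Γ₂`:
    (∃ γ₁ ∈ affSemigroup g₁, F₁.deg p jp = γ₁ + F₁.deg rr jr) ∧
      (∃ γ₂ ∈ affSemigroup g₂, F₂.deg q jq = γ₂ + F₂.deg s js) := by
  obtain ⟨γ, hγ, h⟩ := hdiff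
  obtain ⟨γ₁, hγ₁, γ₂, hγ₂, rfl⟩ := exists_add_of_mem_append g₁ g₂ hγ
  have hd := (linearIndependent_sum.1 hindep).2.2
  have m₁ : ∀ v ∈ affSemigroup g₁, _ := fun v hv => cast_mem_span _ v (hray₁ v hv)
  have m₂ : ∀ v ∈ affSemigroup g₂, _ := fun v hv => cast_mem_span _ v (hray₂ v hv)
  obtain ⟨e₁, e₂⟩ := eq_of_add_eq_add_of_disjoint hd
    (m₁ _ (F₁.deg_mem p jp)) (m₁ _ (add_mem hγ₁ (F₁.deg_mem rr jr)))
    (m₂ _ (F₂.deg_mem q jq)) (m₂ _ (add_mem hγ₂ (F₂.deg_mem s js)))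
    (h.trans (add_add_add_comm γ₁ γ₂ _ _))
  exact ⟨⟨γ₁, hγ₁, e₁⟩, ⟨γ₂, hγ₂, e₂⟩⟩
end
end
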